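/- arXiv:1111.3890 — 5 statements merged into one kernel-verified Lean document; each statement's English description precedes it below -/
import Mathlib

section
/- Let (R,S,P,Q,φ,ψ) be a Morita context over k and M an (R,R)-bimodule with symmetric k-action. Then the composite γ_• ∘ θ_• is chain homotopic to the identity via the explicit homotopy h_•: one has b ∘ h_0 = γ_0 ∘ θ_0 − id on C_0(R,M), and b ∘ h_n + h_{n−1} ∘ b = γ_n ∘ θ_n − id on C_n(R,M) for every n ≥ 1. -/
open scoped TensorProduct
open MulOpposite

universe u

/-- The `k`-submodule of balancing relations `(m·a) ⊗ n − m ⊗ (a·n)` inside `M ⊗[k] N`,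
for a `k`-algebra `A`, a right `A`-module `M` and a left `A`-module `N`.  The balanced
tensor product `M ⊗_A N` is the quotient of `M ⊗[k] N` by this submodule. -/
def midRel (k A M N : Type u) [CommRing k] [Ring A] [Algebra k A]
    [AddCommGroup M] [Module k M] [Module Aᵐᵒᵖ M]
    [AddCommGroup N] [Module k N] [Module A N] :
    Submodule k (TensorProduct k M N) :=
  Submodule.span k {x | ∃ (m : M) (a : A) (n : N),
    x = (op a • m) ⊗ₜ[k] n - m ⊗ₜ[k] (a • n)}

/-- A Morita context `(R, S, P, Q, φ, ψ)` over the commutative ground ring `k`: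
`P` is an `(S,R)`-bimodule and `Q` an `(R,S)`-bimodule (both with symmetric `k`-action,
right actions being encoded as left actions of the opposite algebras), and `φ` and `ψ` are
`k`-bilinear pairings `P × Q → S` and `Q × P → R` which descend to bimodule isomorphisms
`φ : P ⊗_R Q ≅ S` and `ψ : Q ⊗_S P ≅ R` on the balanced tensor products:  the lifted maps on
`P ⊗[k] Q` resp. `Q ⊗[k] P` are surjective and their kernels are exactly the corresponding
submodules of balancing relations (so that the induced maps on the quotients realizing
`P ⊗_R Q` and `Q ⊗_S P` are well defined bijections); moreover the compatibilities
`φ(p ⊗ q)·p' = p·ψ(q ⊗ p')` and `ψ(q ⊗ p)·q' = q·φ(p ⊗ q')` hold. -/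
structure MoritaContext (k R S P Q : Type u) [CommRing k] [Ring R] [Ring S]
    [Algebra k R] [Algebra k S]
    [AddCommGroup P] [Module k P] [Module S P] [Module Rᵐᵒᵖ P]
    [SMulCommClass S Rᵐᵒᵖ P] [IsScalarTower k S P] [IsScalarTower k Rᵐᵒᵖ P]
    [AddCommGroup Q] [Module k Q] [Module R Q] [Module Sᵐᵒᵖ Q]
    [SMulCommClass R Sᵐᵒᵖ Q] [IsScalarTower k R Q] [IsScalarTower k Sᵐᵒᵖ Q] : Type u where
  φ : P →ₗ[k] Q →ₗ[k] S
  ψ : Q →ₗ[k] P →ₗ[k] R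
  φ_ker : LinearMap.ker (TensorProduct.lift φ) = midRel k R P Q
  φ_surj : Function.Surjective (TensorProduct.lift φ)
  ψ_ker : LinearMap.ker (TensorProduct.lift ψ) = midRel k S Q P
  ψ_surj : Function.Surjective (TensorProduct.lift ψ)
  φ_left : ∀ (s : S) (p : P) (q : Q), φ (s • p) q = s * φ p q
  φ_right : ∀ (s : S) (p : P) (q : Q), φ p (op s • q) = φ p q * s
  ψ_left : ∀ (r : R) (q : Q) (p : P), ψ (r • q) p = r * ψ q p
  ψ_right : ∀ (r : R) (q : Q) (p : P), ψ q (op r • p) = ψ q p * r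
  assoc_φψ : ∀ (p : P) (q : Q) (p' : P), φ p q • p' = op (ψ q p') • p
  assoc_ψφ : ∀ (q : Q) (p : P) (q' : Q), ψ q p • q' = op (φ p q') • q

section Hochschild

variable (k : Type u) [CommRing k]

/-- The `n`-th Hochschild chain module `C_n(A, N) = N ⊗_k A^{⊗_k n}`. -/
abbrev HChain (A N : Type u) [Ring A] [Algebra k A] [AddCommGroup N] [Module k N]
    (n : ℕ) :=
  N ⊗[k] (PiTensorProduct k (fun _ : Fin n => A))

/-- The generator `m ⊗ r₁ ⊗ ⋯ ⊗ rₙ` of `C_n(A, N)`. -/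
noncomputable def hgen {A N : Type u} [Ring A] [Algebra k A] [AddCommGroup N] [Module k N]
    {n : ℕ} (m : N) (r : Fin n → A) : HChain k A N n :=
  m ⊗ₜ[k] PiTensorProduct.tprod k r

/-- The tuple obtained from the tuple `r` of length `n + 1` by multiplying the entries at
the (0-based) positions `j` and `j + 1` (all other entries are kept, in their order). -/
def mergeAt {A : Type u} [Mul A] {n : ℕ} (r : Fin (n + 1) → A) (j : Fin n) : Fin n → A :=
  fun l =>
    if l.val < j.val then r l.castSucc
    else if l.val = j.val then r l.castSucc * r l.succ
    else r l.succ

end Hochschild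

namespace HH

set_option linter.unusedSectionVars false

variable {k R M α : Type u} [CommRing k] [Ring R] [Algebra k R]
    [AddCommGroup M] [Module k M] [Module R M] [Module Rᵐᵒᵖ M]
    [SMulCommClass R Rᵐᵒᵖ M] [IsScalarTower k R M] [IsScalarTower k Rᵐᵒᵖ M]

/-- extension of a finite tuple by `1` -/
def ex {n : ℕ} (r : Fin n → R) : ℕ → R := fun l => if h : l < n then r ⟨l, h⟩ else 1

/-- chain given by a sequence -/
noncomputable def G (k : Type u) {R M : Type u} [CommRing k] [Ring R] [Algebra k R]
    [AddCommGroup M] [Module k M] (n : ℕ) (x : M × (ℕ → R)) : HChain k R M n :=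
  hgen k x.1 (fun l : Fin n => x.2 l)

/-- faces -/
def e (N i : ℕ) (x : M × (ℕ → R)) : M × (ℕ → R) :=
  if i = 0 then (op (x.2 0) • x.1, fun l => x.2 (l + 1))
  else if i < N then (x.1, fun l => if l < i - 1 then x.2 l
    else if l = i - 1 then x.2 l * x.2 (l + 1) else x.2 (l + 1))
  else (x.2 (N - 1) • x.1, x.2)

/-- homotopy pieces -/
def D (t : ℕ) (U V : ℕ → R) (x : M × (ℕ → R)) : M × (ℕ → R) :=
  (op (U 0) • x.1, fun l => if l < t then V l * x.2 l * U (l + 1)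
    else if l = t then V t else x.2 (l - 1))

/-- sequence insertion -/
def ins (i : ℕ) (a : R) (U : ℕ → R) : ℕ → R :=
  fun l => if l < i then U l else if l = i then a else U (l - 1)

theorem G_congr (n : ℕ) (x y : M × (ℕ → R)) (h1 : x.1 = y.1) (h2 : ∀ l < n, x.2 l = y.2 l) :
    G k n x = G k n y := by
  unfold G
  rw [h1]
  congr 1
  funext l
  exact h2 l l.2

theorem G_sum [Fintype α] (n : ℕ) (m : M) (s : ℕ → R) (i : ℕ) (hi : i < n) (x : α → R) :
    ∑ a, G k n (m, Function.update s i (x a)) = G k n (m, Function.update s i (∑ a, x a)) := by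
  have key : ∀ y : R, G k n (m, Function.update s i y)
      = m ⊗ₜ[k] PiTensorProduct.tprod k
        (Function.update (fun l : Fin n => s l) ⟨i, hi⟩ y) := by
    intro y
    unfold G hgen
    congr 2
    funext l
    simp [Function.update_apply, Fin.ext_iff]
  simp only [key]
  rw [← TensorProduct.tmul_sum, MultilinearMap.map_update_sum]

theorem G_sum' [Fintype α] (n : ℕ) (m : M) (s : ℕ → R) (x : α → R) :
    ∑ a, G k n (op (x a) • m, s) = G k n (op (∑ a, x a) • m, s) := by
  unfold G hgen
  simp only [← TensorProduct.sum_tmul]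
  congr 1
  rw [← Finset.sum_smul]
  congr 1
  simp

theorem ex_insertNth {t : ℕ} (w : α → R) (i : ℕ) (hi : i < t + 1) (a : α) (c : Fin t → α)
    (l : ℕ) (hl : l < t + 1) :
    ex (fun j => w ((Fin.insertNth ⟨i, hi⟩ a c : Fin (t + 1) → α) j)) l
      = ins i (w a) (ex (fun j => w (c j))) l := by
  simp only [ex, ins]
  rw [dif_pos hl]
  rcases lt_trichotomy l i with h | h | h
  · rw [if_pos h, dif_pos (by omega)]
    rw [Fin.insertNth_apply_below (by simpa [Fin.lt_def] using h)]
    rw [eq_rec_constant]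
    rfl
  · subst h
    simp
  · rw [if_neg (by omega), if_neg (by omega), dif_pos (by omega)]
    rw [Fin.insertNth_apply_above (by simpa [Fin.lt_def] using h)]
    rw [eq_rec_constant]
    rfl

theorem D_congr (t : ℕ) (U V U' V' : ℕ → R) (x : M × (ℕ → R))
    (hU : ∀ l < t + 1, U l = U' l) (hV : ∀ l < t + 1, V l = V' l) :
    D t U V x = D t U' V' x := by
  unfold D
  rw [hU 0 (by omega)]
  congr 1
  funext l
  split_ifs with h1 h2
  · rw [hU _ (by omega), hV _ (by omega)]
  · rw [hV _ (by omega)]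
  · rfl

variable [Fintype α]

/-- sum of faces of homotopy pieces -/
noncomputable def A (k : Type u) {R M α : Type u} [CommRing k] [Ring R] [Algebra k R]
    [AddCommGroup M] [Module k M] [Module R M] [Module Rᵐᵒᵖ M] [Fintype α]
    (u v : α → R) (N : ℕ) (x : M × (ℕ → R)) (i t : ℕ) : HChain k R M N :=
  ∑ c : Fin (t + 1) → α, G k N (e (N + 1) i (D t (ex fun j => u (c j)) (ex fun j => v (c j)) x))

/-- sum of homotopy pieces -/
noncomputable def H (k : Type u) {R M α : Type u} [CommRing k] [Ring R] [Algebra k R]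
    [AddCommGroup M] [Module k M] [Module R M] [Module Rᵐᵒᵖ M] [Fintype α]
    (u v : α → R) (N : ℕ) (t : ℕ) (x : M × (ℕ → R)) : HChain k R M N :=
  ∑ c : Fin (t + 1) → α, G k N (D t (ex fun j => u (c j)) (ex fun j => v (c j)) x)

theorem A_split (u v : α → R) (N : ℕ) (x : M × (ℕ → R)) (i t j : ℕ) (hj : j < t + 1) :
    A k u v N x i t = ∑ c : Fin t → α, ∑ a : α,
      G k N (e (N + 1) i (D t (ins j (u a) (ex fun j => u (c j)))
        (ins j (v a) (ex fun j => v (c j))) x)) := by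
  unfold A
  rw [← (Fin.insertNthEquiv (fun _ => α) ⟨j, hj⟩).sum_comp, Fintype.sum_prod_type_right]
  refine Finset.sum_congr rfl fun c _ => Finset.sum_congr rfl fun a _ => ?_
  rw [D_congr t]
  · intro l hl
    exact ex_insertNth u j hj a c l hl
  · intro l hl
    exact ex_insertNth v j hj a c l hl


/-- `e_i h_t = h_{t-1} e_i` -/
theorem A_lt (u v : α → R) (huv : ∑ a, u a * v a = 1) (N : ℕ) (x : M × (ℕ → R)) (i t : ℕ)
    (hit : i < t + 1) (ht : t + 1 ≤ N) :
    A k u v N x i (t + 1) = H k u v N t (e N i x) := by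
  rw [A_split u v N x i (t + 1) i (by omega)]
  unfold H
  refine Finset.sum_congr rfl fun c _ => ?_
  generalize ex (fun j => u (c j)) = U
  generalize ex (fun j => v (c j)) = V
  rcases Nat.eq_zero_or_pos i with rfl | hi
  · have key : ∀ a, G k N (e (N + 1) 0 (D (t + 1) (ins 0 (u a) U) (ins 0 (v a) V) x))
      = G k N (op (u a * v a * (x.2 0 * U 0)) • x.1, (D t U V (e N 0 x)).2) := by
      intro a
      apply G_congr
      · simp [e, D, ins, smul_smul, mul_assoc]
      · intro l hl
        simp only [e, D, ins]
        grind
    simp only [key]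
    rw [G_sum', ← Finset.sum_mul, huv]
    apply G_congr
    · simp [e, D, smul_smul]
    · intro l hl; rfl
  · have key : ∀ a, G k N (e (N + 1) i (D (t + 1) (ins i (u a) U) (ins i (v a) V) x))
      = G k N (op (U 0) • x.1, Function.update (D t U V (e N i x)).2 (i - 1)
          ((V (i - 1) * x.2 (i - 1)) * (u a * v a) * (x.2 i * U i))) := by
      intro a
      apply G_congr
      · simp [e, D, ins]
        grind
      · intro l hl
        simp only [e, D, ins, Function.update_apply]
        grind
    simp only [key]
    rw [G_sum _ _ _ _ (by omega), ← Finset.sum_mul, ← Finset.mul_sum, huv]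
    apply G_congr
    · simp [e, D]
      grind
    · intro l hl
      simp only [e, D, Function.update_apply]
      grind

theorem A_eq (u v : α → R) (huv : ∑ a, u a * v a = 1) (N : ℕ) (x : M × (ℕ → R)) (t : ℕ)
    (ht : t + 1 ≤ N) :
    A k u v N x (t + 1) (t + 1) = A k u v N x (t + 1) t := by
  rw [A_split u v N x (t + 1) (t + 1) (t + 1) (by omega)]
  unfold A
  refine Finset.sum_congr rfl fun c _ => ?_
  generalize ex (fun j => u (c j)) = U
  generalize ex (fun j => v (c j)) = V
  have key : ∀ a, G k N (e (N + 1) (t + 1) (D (t + 1) (ins (t + 1) (u a) U)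
        (ins (t + 1) (v a) V) x))
      = G k N (op (U 0) • x.1, Function.update (e (N + 1) (t + 1) (D t U V x)).2 t
          ((V t * x.2 t) * (u a * v a))) := by
      intro a
      apply G_congr
      · simp [e, D, ins]
        grind
      · intro l hl
        simp only [e, D, ins, Function.update_apply]
        grind
  simp only [key]
  rw [G_sum _ _ _ _ (by omega), ← Finset.mul_sum, huv]
  apply G_congr
  · simp [e, D]
    grind
  · intro l hl
    simp only [e, D, Function.update_apply]
    grind

theorem A_zero (u v : α → R) (huv : ∑ a, u a * v a = 1) (N : ℕ) (x : M × (ℕ → R)) :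
    A k u v N x 0 0 = G k N x := by
  rw [A_split u v N x 0 0 0 (by omega)]
  simp only [Finset.univ_unique, Finset.sum_singleton]
  generalize ex (fun j => u ((default : Fin 0 → α) j)) = U
  generalize ex (fun j => v ((default : Fin 0 → α) j)) = V
  have key : ∀ a, G k N (e (N + 1) 0 (D 0 (ins 0 (u a) U) (ins 0 (v a) V) x))
      = G k N (op (u a * v a) • x.1, x.2) := by
      intro a
      apply G_congr
      · simp [e, D, ins, smul_smul]
      · intro l hl
        simp [e, D]
  simp only [key]
  rw [G_sum', huv]
  simp

theorem A_gt (u v : α → R) (N : ℕ) (x : M × (ℕ → R)) (i t : ℕ)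
    (hit : t + 1 ≤ i) (ht : i ≤ N) :
    A k u v N x (i + 1) t = H k u v N t (e N i x) := by
  unfold A H
  refine Finset.sum_congr rfl fun c _ => ?_
  generalize ex (fun j => u (c j)) = U
  generalize ex (fun j => v (c j)) = V
  apply G_congr
  · simp only [e, D]
    have h0 : i ≠ 0 := by omega
    rcases lt_or_eq_of_le ht with h | rfl
    · simp [h0, h]
    · have h1 : ¬ (i < t) := by omega
      have h2 : i ≠ t := by omega
      simp [h0, h1, h2, smul_comm]
  · intro l hl
    simp only [e, D]
    rcases lt_or_eq_of_le ht with h | rfl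
    · grind
    · have h0 : i ≠ 0 := by omega
      simp [h0]

theorem alt_sum {B : Type*} [AddCommGroup B] (N : ℕ) (A : ℕ → ℕ → B) (H : ℕ → ℕ → B)
    (h1 : ∀ i t, i < t + 1 → t + 1 ≤ N → A i (t + 1) = H t i)
    (h2 : ∀ t, t + 1 ≤ N → A (t + 1) (t + 1) = A (t + 1) t)
    (h3 : ∀ i t, t + 1 ≤ i → i ≤ N → A (i + 1) t = H t i) :
    (∑ i ∈ Finset.range (N + 2), ∑ t ∈ Finset.range (N + 1), ((-1 : ℤ) ^ (i + t)) • A i t)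
    + (∑ i ∈ Finset.range (N + 1), ∑ t ∈ Finset.range N, ((-1 : ℤ) ^ (i + t)) • H t i)
    = A 0 0 - A (N + 1) N := by
  rw [Finset.sum_comm]
  have row : ∀ t ∈ Finset.range (N + 1),
      ∑ i ∈ Finset.range (N + 2), ((-1 : ℤ) ^ (i + t)) • A i t
      = ∑ i ∈ Finset.range t, ((-1 : ℤ) ^ (i + t)) • A i t + (A t t - A (t + 1) t)
        - ∑ i ∈ Finset.range (N - t), ((-1 : ℤ) ^ (t + 1 + i + t)) • H t (t + 1 + i) := by
    intro t ht
    obtain ⟨d, rfl⟩ : ∃ d, N = t + d := ⟨N - t, by simp at ht; omega⟩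
    rw [show t + d + 2 = t + (2 + d) by omega, Finset.sum_range_add, Finset.sum_range_add,
      sub_eq_add_neg _ (∑ i ∈ Finset.range _, _), add_assoc, ← Finset.sum_neg_distrib]
    congr 2
    · simp [Finset.sum_range_succ, ← two_mul, show t + 1 + t = 2 * t + 1 by ring, pow_succ,
        pow_mul, sub_eq_add_neg]
    · simp only [Nat.add_sub_cancel_left]
      refine Finset.sum_congr rfl fun i hi => ?_
      rw [← neg_smul, ← h3 (t + 1 + i) t (by omega) (by simp at hi; omega),
        show t + (2 + i) = t + 1 + i + 1 by omega,
        show t + 1 + i + 1 + t = t + 1 + i + t + 1 by omega, pow_succ]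
      simp
  have row2 : ∀ t ∈ Finset.range N,
      ∑ i ∈ Finset.range (N + 1), ((-1 : ℤ) ^ (i + t)) • H t i
      = -∑ i ∈ Finset.range (t + 1), ((-1 : ℤ) ^ (i + (t + 1))) • A i (t + 1)
        + ∑ i ∈ Finset.range (N - t), ((-1 : ℤ) ^ (t + 1 + i + t)) • H t (t + 1 + i) := by
    intro t ht
    obtain ⟨d, rfl⟩ : ∃ d, N = t + d := ⟨N - t, by simp at ht; omega⟩
    rw [show t + d + 1 = t + 1 + d by omega, Finset.sum_range_add, ← Finset.sum_neg_distrib,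
      Nat.add_sub_cancel_left]
    congr 1
    refine Finset.sum_congr rfl fun i hi => ?_
    simp at hi ht
    rw [← neg_smul, h1 i t (by omega) (by omega), ← add_assoc, pow_succ]
    simp
  have tele : ∀ n, n ≤ N → ∑ t ∈ Finset.range (n + 1), (A t t - A (t + 1) t)
      = A 0 0 - A (n + 1) n := by
    intro n
    induction n with
    | zero => simp
    | succ n ih =>
      intro hn
      rw [Finset.sum_range_succ, ih (by omega), h2 n hn]
      abel
  rw [Finset.sum_congr rfl row, Finset.sum_comm (s := Finset.range (N + 1)),
    Finset.sum_congr rfl row2, Finset.sum_sub_distrib, Finset.sum_add_distrib,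
    Finset.sum_add_distrib, Finset.sum_neg_distrib, tele N le_rfl,
    Finset.sum_range_succ' (fun t => ∑ i ∈ Finset.range t, ((-1 : ℤ) ^ (i + t)) • A i t),
    Finset.sum_range_succ (fun t => ∑ i ∈ Finset.range (N - t), _)]
  simp


theorem main_abs (u v : α → R) (huv : ∑ a, u a * v a = 1)
    (bR : ∀ n, HChain k R M (n + 1) →ₗ[k] HChain k R M n)
    (hb : ∀ n (x : M × (ℕ → R)), bR n (G k (n + 1) x)
      = ∑ i ∈ Finset.range (n + 2), ((-1 : ℤ) ^ (n + 1 + i)) • G k n (e (n + 1) i x))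
    (h : ∀ n, HChain k R M n →ₗ[k] HChain k R M (n + 1))
    (hH : ∀ n (x : M × (ℕ → R)), h n (G k n x)
      = ∑ t ∈ Finset.range (n + 1), ((-1 : ℤ) ^ (n + t)) • H k u v (n + 1) t x)
    (x : M × (ℕ → R)) :
    bR 0 (h 0 (G k 0 x)) = A k u v 0 x 1 0 - G k 0 x ∧
    ∀ n, bR (n + 1) (h (n + 1) (G k (n + 1) x)) + h n (bR n (G k (n + 1) x))
      = A k u v (n + 1) x (n + 1 + 1) (n + 1) - G k (n + 1) x := by
  have hbh : ∀ N, bR N (h N (G k N x)) = - ∑ i ∈ Finset.range (N + 2),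
      ∑ t ∈ Finset.range (N + 1), ((-1 : ℤ) ^ (i + t)) • A k u v N x i t := by
    intro N
    rw [hH, map_sum, Finset.sum_comm, ← Finset.sum_neg_distrib]
    refine Finset.sum_congr rfl fun t _ => ?_
    rw [map_zsmul, H, map_sum]
    simp only [hb]
    rw [Finset.sum_comm, Finset.smul_sum, ← Finset.sum_neg_distrib]
    refine Finset.sum_congr rfl fun i _ => ?_
    rw [← Finset.smul_sum, smul_smul, ← neg_smul, A]
    congr 1
    rw [← pow_add, show N + t + (N + 1 + i) = 2 * N + (i + t) + 1 by ring, pow_succ, pow_add,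
      pow_mul]
    simp
  have alt : ∀ N, _ := fun N => alt_sum N (A k u v N x) (fun t i => H k u v N t (e N i x))
    (fun i t h1 h2 => A_lt u v huv N x i t h1 h2) (fun t h1 => A_eq u v huv N x t h1)
    (fun i t h1 h2 => A_gt u v N x i t h1 h2)
  constructor
  · have := alt 0
    rw [hbh 0]
    simp only [Finset.range_zero, Finset.sum_empty, Finset.sum_const_zero, add_zero,
      A_zero u v huv] at this
    rw [this]
    simp
  · intro n
    have := alt (n + 1)
    rw [A_zero u v huv] at this
    rw [hbh (n + 1), ← neg_sub (G k (n + 1) x), ← this, neg_add]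
    congr 1
    rw [hb, map_sum, ← Finset.sum_neg_distrib]
    refine Finset.sum_congr rfl fun i _ => ?_
    rw [map_zsmul, hH, Finset.smul_sum, ← Finset.sum_neg_distrib]
    refine Finset.sum_congr rfl fun t _ => ?_
    rw [smul_smul, ← neg_smul]
    congr 1
    rw [← pow_add, show n + 1 + i + (n + t) = 2 * n + (i + t) + 1 by ring, pow_succ, pow_add,
      pow_mul]
    simp

theorem hgen_eq_G {n : ℕ} (m : M) (r : Fin n → R) : hgen k m r = G k n (m, ex r) := by
  unfold G
  congr 1
  funext l
  simp [ex]

theorem hb_abs (bR : ∀ n, HChain k R M (n + 1) →ₗ[k] HChain k R M n)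
    (hbR : ∀ (n : ℕ) (m : M) (r : Fin (n + 1) → R),
      bR n (hgen k m r) =
        hgen k (r (Fin.last n) • m) (Fin.init r)
          + ∑ j : Fin n, ((-1 : ℤ) ^ (n - j.val)) • hgen k m (mergeAt r j)
          + ((-1 : ℤ) ^ (n + 1)) • hgen k (op (r 0) • m) (Fin.tail r))
    (n : ℕ) (x : M × (ℕ → R)) : bR n (G k (n + 1) x)
      = ∑ i ∈ Finset.range (n + 2), ((-1 : ℤ) ^ (n + 1 + i)) • G k n (e (n + 1) i x) := by
  rw [Finset.sum_range_succ, Finset.sum_range_succ', G, hbR, add_comm (_ + _) (_ • G k n _),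
    ← add_assoc]
  congr 1
  · congr 1
    · rw [← two_mul, pow_mul]
      simp [G, e]
      rfl
    · rw [Finset.sum_range]
      refine Finset.sum_congr rfl fun j _ => ?_
      congr 1
      · obtain ⟨d, hd⟩ : ∃ d, n = j + d := ⟨n - j, by omega⟩
        rw [show n - (j : ℕ) = d by omega, show n + 1 + ((j : ℕ) + 1) = 2 * (j + 1) + d by omega,
          pow_add, pow_mul]
        simp
      · have := j.2
        simp [G, e]
        rfl

theorem sum_pairs {ι κ B : Type*} [AddCommMonoid B] [Fintype ι] [Fintype κ] (n : ℕ)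
    (F : (Fin n → ι) → (Fin n → κ) → B) :
    ∑ f : Fin n → ι, ∑ g : Fin n → κ, F f g
      = ∑ c : Fin n → ι × κ, F (fun l => (c l).1) (fun l => (c l).2) := by
  rw [← Fintype.sum_prod_type', ← (Equiv.arrowProdEquivProdArrow (Fin n) _ _).sum_comp]
  rfl

end HH


/-- Let `(R, S, P, Q, φ, ψ)` be a Morita context over `k` and `M` an
`(R,R)`-bimodule with symmetric `k`-action.  Then the composite `γ_• ∘ θ_•` is chain
homotopic to the identity via the explicit homotopy `h_•`:  one has
`b ∘ h_0 = γ_0 ∘ θ_0 − id` on `C_0(R, M)`, and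
`b ∘ h_n + h_{n−1} ∘ b = γ_n ∘ θ_n − id` on `C_n(R, M)` for every `n ≥ 1`. -/
theorem gamma_theta_homotopic_id
    (k R S P Q M Mt : Type u) [CommRing k] [Ring R] [Ring S] [Algebra k R] [Algebra k S]
    [AddCommGroup P] [Module k P] [Module S P] [Module Rᵐᵒᵖ P]
    [SMulCommClass S Rᵐᵒᵖ P] [IsScalarTower k S P] [IsScalarTower k Rᵐᵒᵖ P]
    [AddCommGroup Q] [Module k Q] [Module R Q] [Module Sᵐᵒᵖ Q]
    [SMulCommClass R Sᵐᵒᵖ Q] [IsScalarTower k R Q] [IsScalarTower k Sᵐᵒᵖ Q]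
    [AddCommGroup M] [Module k M] [Module R M] [Module Rᵐᵒᵖ M]
    [SMulCommClass R Rᵐᵒᵖ M] [IsScalarTower k R M] [IsScalarTower k Rᵐᵒᵖ M]
    [AddCommGroup Mt] [Module k Mt] [Module S Mt] [Module Sᵐᵒᵖ Mt]
    [SMulCommClass S Sᵐᵒᵖ Mt] [IsScalarTower k S Mt] [IsScalarTower k Sᵐᵒᵖ Mt]
    -- the Morita context and the fixed finite families with `Σⱼ φ(p'ⱼ ⊗ q'ⱼ) = 1_S`
    -- and `Σᵢ ψ(qᵢ ⊗ pᵢ) = 1_R`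
    (ctx : MoritaContext k R S P Q)
    (ι κ : Type u) [Fintype ι] [Fintype κ]
    (pI : ι → P) (qI : ι → Q) (pJ : κ → P) (qJ : κ → Q)
    (hI : ∑ i : ι, ctx.ψ (qI i) (pI i) = 1)
    (hJ : ∑ j : κ, ctx.φ (pJ j) (qJ j) = 1)
    -- `Mt` plays the role of `M̃ = P ⊗_R M ⊗_R Q`, with `emb p m q` the class of
    -- `p ⊗ m ⊗ q`; it is an `(S,S)`-bimodule spanned by these classes, the `S`-actions
    -- being `s·(p ⊗ m ⊗ q)·s' = (s·p) ⊗ m ⊗ (q·s')`, and the tensor products are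
    -- balanced over `R`
    (emb : P →ₗ[k] M →ₗ[k] Q →ₗ[k] Mt)
    (hemb_bal₁ : ∀ (r : R) (p : P) (m : M) (q : Q), emb (op r • p) m q = emb p (r • m) q)
    (hemb_bal₂ : ∀ (r : R) (p : P) (m : M) (q : Q), emb p (op r • m) q = emb p m (r • q))
    (hemb_left : ∀ (s : S) (p : P) (m : M) (q : Q), emb (s • p) m q = s • emb p m q)
    (hemb_right : ∀ (s : S) (p : P) (m : M) (q : Q), emb p m (op s • q) = op s • emb p m q)
    (hemb_span : Submodule.span k {x : Mt | ∃ (p : P) (m : M) (q : Q), emb p m q = x} = ⊤)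
    -- the Hochschild boundaries of `C_•(R, M)` and `C_•(S, M̃)`
    (bR : ∀ n, HChain k R M (n + 1) →ₗ[k] HChain k R M n)
    (hbR : ∀ (n : ℕ) (m : M) (r : Fin (n + 1) → R),
      bR n (hgen k m r) =
        hgen k (r (Fin.last n) • m) (Fin.init r)
          + ∑ j : Fin n, ((-1 : ℤ) ^ (n - j.val)) • hgen k m (mergeAt r j)
          + ((-1 : ℤ) ^ (n + 1)) • hgen k (op (r 0) • m) (Fin.tail r))
    (bS : ∀ n, HChain k S Mt (n + 1) →ₗ[k] HChain k S Mt n)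
    (hbS : ∀ (n : ℕ) (m : Mt) (s : Fin (n + 1) → S),
      bS n (hgen k m s) =
        hgen k (s (Fin.last n) • m) (Fin.init s)
          + ∑ j : Fin n, ((-1 : ℤ) ^ (n - j.val)) • hgen k m (mergeAt s j)
          + ((-1 : ℤ) ^ (n + 1)) • hgen k (op (s 0) • m) (Fin.tail s))
    -- the chain map `θ_•`
    (θ : ∀ n, HChain k R M n →ₗ[k] HChain k S Mt n)
    (hθ : ∀ (n : ℕ) (m : M) (r : Fin n → R),
      θ n (hgen k m r) =
        ∑ f : Fin (n + 1) → ι,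
          hgen k (emb (pI (f 0)) m (qI (f 1)))
            (fun l : Fin n => ctx.φ (pI (f l.succ)) (r l • qI (f (l.succ + 1)))))
    -- the chain map `γ_•`
    (γ : ∀ n, HChain k S Mt n →ₗ[k] HChain k R M n)
    (hγ : ∀ (n : ℕ) (p : P) (m : M) (q : Q) (s : Fin n → S),
      γ n (hgen k (emb p m q) s) =
        ∑ g : Fin (n + 1) → κ,
          hgen k (ctx.ψ (qJ (g 0)) p • (op (ctx.ψ q (pJ (g 1))) • m))
            (fun l : Fin n => ctx.ψ (qJ (g l.succ)) (s l • pJ (g (l.succ + 1)))))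
    -- the explicit homotopy `h_•`
    (h : ∀ n, HChain k R M n →ₗ[k] HChain k R M (n + 1))
    (hh : ∀ (n : ℕ) (m : M) (r : Fin n → R),
      h n (hgen k m r) =
        ∑ t : Fin (n + 1), ∑ f : Fin (t.val + 1) → ι, ∑ g : Fin (t.val + 1) → κ,
          ((-1 : ℤ) ^ (n + t.val)) •
            hgen k (op (ctx.ψ (qI (f 0)) (pJ (g 0))) • m)
              (fun l : Fin (n + 1) =>
                if hl : l.val < t.val then
                  ctx.ψ (qJ (g ⟨l.val, by omega⟩)) (pI (f ⟨l.val, by omega⟩))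
                    * r ⟨l.val, by have := t.isLt; omega⟩
                    * ctx.ψ (qI (f ⟨l.val + 1, by omega⟩)) (pJ (g ⟨l.val + 1, by omega⟩))
                else if hl2 : l.val = t.val then
                  ctx.ψ (qJ (g (Fin.last t.val))) (pI (f (Fin.last t.val)))
                else r ⟨l.val - 1, by have := l.isLt; omega⟩))
 :
    (bR 0).comp (h 0) = (γ 0).comp (θ 0) - LinearMap.id ∧
    ∀ n : ℕ, (bR (n + 1)).comp (h (n + 1)) + (h n).comp (bR n)
      = (γ (n + 1)).comp (θ (n + 1)) - LinearMap.id := by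
  classical
  let u : ι × κ → R := fun a => ctx.ψ (qI a.1) (pJ a.2)
  let v : ι × κ → R := fun a => ctx.ψ (qJ a.2) (pI a.1)
  have huv : ∑ a, u a * v a = 1 := by
    rw [Fintype.sum_prod_type, ← hI]
    refine Finset.sum_congr rfl fun i _ => ?_
    simp only [u, v]
    simp only [← ctx.ψ_right, ← ctx.assoc_φψ]
    rw [← map_sum, ← Finset.sum_smul, hJ, one_smul]
  have hH : ∀ n (x : M × (ℕ → R)), h n (HH.G k n x)
      = ∑ t ∈ Finset.range (n + 1), ((-1 : ℤ) ^ (n + t)) • HH.H k u v (n + 1) t x := by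
    intro n x
    rw [HH.G, hh, Finset.sum_range]
    refine Finset.sum_congr rfl fun t _ => ?_
    rw [HH.sum_pairs, HH.H, Finset.smul_sum]
    refine Finset.sum_congr rfl fun c _ => ?_
    congr 1
    unfold HH.G
    congr 1
    funext l
    simp only [HH.D, HH.ex]
    by_cases h1 : l.val < t.val
    · have h2 : l.val < t.val + 1 := by omega
      simp [h1, h2, u, v]
    · by_cases h2 : l.val = t.val
      · simp [h2, v, Fin.last]
      · simp [h1, h2]
  have hγθ : ∀ n (x : M × (ℕ → R)), γ n (θ n (HH.G k n x)) = HH.A k u v n x (n + 1) n := by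
    intro n x
    rw [HH.G, hθ, map_sum]
    simp only [hγ]
    rw [HH.sum_pairs, HH.A]
    refine Eq.trans ?_ (Equiv.sum_comp (Equiv.arrowCongr (Equiv.addRight (1 : Fin (n + 1))).symm
        (Equiv.refl (ι × κ))) _)
    refine Finset.sum_congr rfl fun c _ => ?_
    unfold HH.G
    have hs : ∀ l : Fin n, (⟨l.val, by omega⟩ : Fin (n + 1)) + 1 = l.succ := by
      intro l
      exact Fin.coeSucc_eq_succ
    have hlast : (⟨n, by omega⟩ : Fin (n + 1)) + 1 = 0 := Fin.last_add_one n
    congr 1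
    · simp [HH.e, HH.D, HH.ex, u, v, hlast]
    · funext l
      have h2 : (⟨l.val + 1, by omega⟩ : Fin (n + 1)) = l.succ := rfl
      simp [HH.e, HH.D, HH.ex, u, v, hs, h2, ctx.assoc_φψ, ctx.ψ_left, mul_assoc]
      rw [← op_mul, ctx.ψ_right]
  have hb := HH.hb_abs bR hbR
  have main := HH.main_abs u v huv bR hb h hH
  constructor
  · refine TensorProduct.ext (LinearMap.ext fun m => PiTensorProduct.ext
      (MultilinearMap.ext fun r => ?_))
    have := (main (m, HH.ex r)).1
    rw [← hγθ, ← HH.hgen_eq_G] at this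
    exact this
  · intro n
    refine TensorProduct.ext (LinearMap.ext fun m => PiTensorProduct.ext
      (MultilinearMap.ext fun r => ?_))
    have := (main (m, HH.ex r)).2 n
    rw [← hγθ, ← HH.hgen_eq_G] at this
    exact this
end

section
/- Let (R,S,P,Q,φ,ψ) be a Morita context over k and M an (R,R)-bimodule with symmetric k-action. Then the composite θ_• ∘ γ_• is chain homotopic to the identity of C_•(S,M̃): there exist k-linear maps h̃_n : C_n(S,M̃) → C_{n+1}(S,M̃) with b ∘ h̃_0 = θ_0 ∘ γ_0 − id and b ∘ h̃_n + h̃_{n−1} ∘ b = θ_n ∘ γ_n − id for all n ≥ 1. -/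
open scoped TensorProduct
open MulOpposite

universe u

theorem comb_aux {G : Type*} [AddCommGroup G] (F E : ℕ → ℕ → G) (N : ℕ)
    (hA : ∀ t j, t ≤ N → j < t → F t j = E (t - 1) j)
    (hB : ∀ t j, j ≤ N + 1 → t + 2 ≤ j → F t j = E t (j - 1))
    (hC : ∀ t, t < N → F (t + 1) (t + 1) = F t (t + 1)) :
    ∑ t ∈ Finset.range (N + 1), ∑ j ∈ Finset.range (N + 2), ((-1 : ℤ) ^ (t + j)) • F t j
      + ∑ t ∈ Finset.range N, ∑ j ∈ Finset.range (N + 1), ((-1 : ℤ) ^ (t + j)) • E t j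
      = F 0 0 - F N (N + 1) := by
  set Pp : ℕ → G := fun t => ∑ j ∈ Finset.range t, ((-1 : ℤ) ^ (t + j)) • E (t - 1) j with hP
  set U : ℕ → G := fun t => ∑ r ∈ Finset.range (N - t),
    ((-1 : ℤ) ^ r) • E t (t + 1 + r) with hU
  have h1 : ∀ t ∈ Finset.range (N + 1),
      ∑ j ∈ Finset.range (N + 2), ((-1 : ℤ) ^ (t + j)) • F t j
        = Pp t + U t + (F t t - F t (t + 1)) := by
    intro t ht
    have ht' : t ≤ N := by simpa [Nat.lt_succ_iff] using ht
    obtain ⟨r, rfl⟩ := Nat.exists_eq_add_of_le ht'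
    have : t + r + 2 = t + (2 + r) := by ring
    rw [this, Finset.sum_range_add, Finset.sum_range_add, Finset.sum_range_succ,
      Finset.sum_range_one]
    have e1 : ∑ j ∈ Finset.range t, ((-1 : ℤ) ^ (t + j)) • F t j = Pp t := by
      apply Finset.sum_congr rfl
      intro j hj
      rw [hA t j ht' (by simpa using hj)]
    have e2 : ∑ x ∈ Finset.range r, ((-1 : ℤ) ^ (t + (t + (2 + x)))) • F t (t + (2 + x)) = U t := by
      simp only [hU, Nat.add_sub_cancel_left]
      apply Finset.sum_congr rfl
      intro j hj
      have hj' : j < r := by simpa using hj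
      rw [hB t _ (by omega) (by omega)]
      congr 1
      · rw [show t + (t + (2 + j)) = 2 * (t + 1) + j by ring, pow_add, pow_mul]; simp
      · congr 1; omega
    rw [e1, e2]
    have s1 : (-1 : ℤ) ^ (t + (t + 0)) = 1 := by
      rw [show t + (t + 0) = 2 * t by ring, pow_mul]; simp
    have s2 : (-1 : ℤ) ^ (t + (t + 1)) = -1 := by
      rw [show t + (t + 1) = 2 * t + 1 by ring, pow_succ, pow_mul]; simp
    rw [s1, s2]; simp; abel
  have h2 : ∀ t ∈ Finset.range N,
      ∑ j ∈ Finset.range (N + 1), ((-1 : ℤ) ^ (t + j)) • E t j = - Pp (t + 1) - U t := by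
    intro t ht
    have ht' : t < N := by simpa using ht
    have : N + 1 = (t + 1) + (N - t) := by omega
    rw [this, Finset.sum_range_add, sub_eq_add_neg]
    congr 1
    · simp only [hP, ← Finset.sum_neg_distrib]
      apply Finset.sum_congr rfl
      intro j hj
      rw [show t + 1 + j = t + j + 1 by ring, pow_succ]; simp
    · simp only [hU, ← Finset.sum_neg_distrib]
      apply Finset.sum_congr rfl
      intro j hj
      rw [show t + (t + 1 + j) = 2 * t + 1 + j by ring, pow_add, pow_succ, pow_mul]; simp
  rw [Finset.sum_congr rfl h1, Finset.sum_congr rfl h2]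
  simp only [Finset.sum_add_distrib, Finset.sum_sub_distrib, Finset.sum_neg_distrib]
  have h3 : ∑ t ∈ Finset.range (N + 1), F t t = F 0 0 + ∑ t ∈ Finset.range N, F t (t + 1) := by
    rw [Finset.sum_range_succ', add_comm]
    congr 1
    apply Finset.sum_congr rfl
    intro j hj
    exact hC j (by simpa using hj)
  rw [h3, Finset.sum_range_succ' Pp, Finset.sum_range_succ U, Finset.sum_range_succ _ N]
  have : Pp 0 = 0 := by simp [hP]
  rw [this]
  have : U N = 0 := by simp [hU]
  rw [this]
  abel

section
variable {k : Type*} [CommRing k] {C : ℕ → Type*} [∀ n, AddCommGroup (C n)] [∀ n, Module k (C n)]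

noncomputable def hh (d : ∀ n, ℕ → C (n + 1) →ₗ[k] C n) (σ : ∀ n, ℕ → C n →ₗ[k] C (n + 1)) :
    ℕ → ∀ n, C n →ₗ[k] C (n + 1)
  | 0, n => σ n 0
  | t + 1, n => σ n (t + 1) ∘ₗ d n (t + 1) ∘ₗ hh d σ t n

theorem homotopy_aux
    (d : ∀ n, ℕ → C (n + 1) →ₗ[k] C n) (σ : ∀ n, ℕ → C n →ₗ[k] C (n + 1))
    (hdd : ∀ n i j z, i ≤ j → j ≤ n + 1 → d n i (d (n + 1) (j + 1) z) = d n j (d (n + 1) i z))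
    (hd0 : ∀ n t z, t ≤ n → d n t (σ n t z) = z)
    (hd1 : ∀ n j t z, j ≤ t → t ≤ n → d (n + 1) j (σ (n + 1) (t + 1) z) = σ n t (d n j z))
    (hd2 : ∀ n j t z, t + 1 ≤ j → j ≤ n + 1 → d (n + 1) (j + 1) (σ (n + 1) t z) = σ n t (d n j z))
    (n : ℕ) (z : C (n + 1)) :
    (∑ j ∈ Finset.range (n + 3), ((-1 : ℤ) ^ j) • d (n + 1) j
      (∑ t ∈ Finset.range (n + 2), ((-1 : ℤ) ^ t) • hh d σ t (n + 1) z))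
      + ∑ t ∈ Finset.range (n + 1), ((-1 : ℤ) ^ t) • hh d σ t n
        (∑ j ∈ Finset.range (n + 2), ((-1 : ℤ) ^ j) • d n j z)
      = z - d (n + 1) (n + 2) (hh d σ (n + 1) (n + 1) z) := by
  have hC : ∀ n t (z : C n), t + 1 ≤ n →
      d n (t + 1) (hh d σ (t + 1) n z) = d n (t + 1) (hh d σ t n z) := by
    intro n t z h
    simp only [hh, LinearMap.comp_apply]
    rw [hd0 _ _ _ h]
  have hB : ∀ t n j (z : C (n + 1)), t + 1 ≤ j → j ≤ n + 1 →
      d (n + 1) (j + 1) (hh d σ t (n + 1) z) = hh d σ t n (d n j z) := by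
    intro t
    induction t with
    | zero => intro n j z h1 h2; simp only [hh]; rw [hd2 _ _ _ _ h1 h2]
    | succ t ih =>
      intro n j z h1 h2
      simp only [hh, LinearMap.comp_apply]
      rw [hd2 _ _ _ _ h1 h2, ← hdd _ _ _ _ (by omega) h2, ih _ _ _ (by omega) h2]
  have hA : ∀ t n j (z : C (n + 1)), j ≤ t → t ≤ n →
      d (n + 1) j (hh d σ (t + 1) (n + 1) z) = hh d σ t n (d n j z) := by
    intro t
    induction t with
    | zero =>
      intro n j z h1 h2
      obtain rfl : j = 0 := by omega
      simp only [hh, LinearMap.comp_apply]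
      rw [hd1 _ _ _ _ h1 h2, hdd _ _ _ _ le_rfl (by omega), hd0 _ _ _ (by omega)]
    | succ t ih =>
      intro n j z h1 h2
      rw [hh, LinearMap.comp_apply, LinearMap.comp_apply, hd1 _ _ _ _ h1 h2,
        hdd _ _ _ _ h1 (by omega)]
      rcases Nat.lt_or_ge j (t + 1) with h | h
      · rw [ih _ _ _ (by omega) (by omega)]; simp only [hh, LinearMap.comp_apply]
      · obtain rfl : j = t + 1 := by omega
        rw [hC _ _ _ (by omega), ← hdd _ _ _ _ le_rfl (by omega), hB _ _ _ _ (by omega) (by omega)]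
        simp only [hh, LinearMap.comp_apply]
  have key := comb_aux (fun t j => d (n + 1) j (hh d σ t (n + 1) z))
    (fun t j => hh d σ t n (d n j z)) (n + 1) ?_ ?_ ?_
  · have h0 : d (n + 1) 0 (hh d σ 0 (n + 1) z) = z := hd0 _ _ _ (Nat.zero_le _)
    beta_reduce at key
    rw [h0] at key
    simp only [map_sum, map_zsmul, Finset.smul_sum, smul_smul, ← pow_add]
    rw [Finset.sum_comm]
    refine Eq.trans ?_ key
    congr 1
    refine Finset.sum_congr rfl fun t _ => Finset.sum_congr rfl fun j _ => ?_
    rw [add_comm j t]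
  · intro t j h1 h2
    obtain ⟨t, rfl⟩ : ∃ t', t = t' + 1 := ⟨t - 1, by omega⟩
    exact hA t n j z (by omega) (by omega)
  · intro t j h1 h2
    obtain ⟨j, rfl⟩ : ∃ t', j = t' + 1 := ⟨j - 1, by omega⟩
    exact hB t n j z (by omega) (by omega)
  · intro t h
    exact hC _ t z (by omega)
end

section ops
variable (k : Type u) [CommRing k] {S N : Type u} [Ring S] [Algebra k S]
  [AddCommGroup N] [Module k N]

noncomputable def gg (n : ℕ) (x : N) (s : ℕ → S) : HChain k S N n :=
  hgen k x (fun l : Fin n => s l)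

theorem gg_congr {n : ℕ} {x y : N} {s t : ℕ → S} (h : x = y) (hs : ∀ l < n, s l = t l) :
    gg k n x s = gg k n y t := by
  unfold gg
  rw [h]
  congr 1
  funext l
  exact hs l l.2

noncomputable def ggx (n : ℕ) (s : ℕ → S) : N →ₗ[k] HChain k S N n :=
  (TensorProduct.mk k N _).flip (PiTensorProduct.tprod k (fun l : Fin n => s l))

theorem ggx_apply (n : ℕ) (s : ℕ → S) (x : N) : ggx k n s x = gg k n x s := rfl

noncomputable def ggs (n : ℕ) (x : N) (s : ℕ → S) (i : Fin n) : S →ₗ[k] HChain k S N n :=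
  (TensorProduct.mk k N _ x) ∘ₗ
    (PiTensorProduct.tprod k).toLinearMap (fun l : Fin n => s l) i

theorem ggs_apply (n : ℕ) (x : N) (s : ℕ → S) (i : ℕ) (hi : i < n) (c : S) :
    ggs k n x s ⟨i, hi⟩ c = gg k n x (Function.update s i c) := by
  simp only [ggs, gg, hgen, LinearMap.comp_apply, TensorProduct.mk_apply,
    MultilinearMap.toLinearMap_apply]
  congr 2
  funext l
  simp only [Function.update_apply, Fin.ext_iff]

theorem gg_span_ext {n : ℕ} {C : Type*} [AddCommGroup C] [Module k C]
    (f g : HChain k S N n →ₗ[k] C)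
    (h : ∀ x s, f (gg k n x s) = g (gg k n x s)) : f = g := by
  apply TensorProduct.ext
  ext x s
  have := h x (fun l => if h : l < n then s ⟨l, h⟩ else 0)
  simpa [gg, hgen] using this

theorem exists_lin (m : ℕ) {C : Type*} [AddCommGroup C] [Module k C]
    (F : N → (ℕ → S) → C)
    (hc : ∀ x s t, (∀ l < m, s l = t l) → F x s = F x t)
    (hx : ∀ s, ∃ L : N →ₗ[k] C, ∀ x, F x s = L x)
    (hs : ∀ x s i, i < m → ∃ L : S →ₗ[k] C, ∀ c, F x (Function.update s i c) = L c) :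
    ∃ L : HChain k S N m →ₗ[k] C, ∀ x s, L (gg k m x s) = F x s := by
  let e : (Fin m → S) → ℕ → S := fun s l => if h : l < m then s ⟨l, h⟩ else 0
  have he : ∀ (s : Fin m → S) (i : Fin m) (c : S),
      e (Function.update s i c) = Function.update (e s) i c := by
    intro s i c
    funext l
    simp only [e, Function.update_apply, Fin.ext_iff]
    split_ifs <;> first | rfl | omega
  let μ : N → MultilinearMap k (fun _ : Fin m => S) C := fun x =>
    { toFun := fun s => F x (e s)
      map_update_add' := by
        intro inst s i a b
        obtain rfl : inst = instDecidableEqFin m := Subsingleton.elim _ _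
        obtain ⟨L, hL⟩ := hs x (e s) i i.2
        rw [he, he, he, hL, hL, hL, map_add]
      map_update_smul' := by
        intro inst s i a b
        obtain rfl : inst = instDecidableEqFin m := Subsingleton.elim _ _
        obtain ⟨L, hL⟩ := hs x (e s) i i.2
        rw [he, he, hL, hL, map_smul] }
  let Λ : N →ₗ[k] MultilinearMap k (fun _ : Fin m => S) C :=
    { toFun := μ
      map_add' := by
        intro x y
        ext s
        obtain ⟨L, hL⟩ := hx (e s)
        change F _ _ = F _ _ + F _ _
        rw [hL, hL, hL, map_add]
      map_smul' := by
        intro a x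
        ext s
        obtain ⟨L, hL⟩ := hx (e s)
        change F _ _ = a • F _ _
        rw [hL, hL, map_smul] }
  refine ⟨TensorProduct.lift ((PiTensorProduct.lift (R := k) (s := fun _ : Fin m => S) (E := C)).toLinearMap ∘ₗ Λ), ?_⟩
  intro x s
  simp only [gg, hgen, TensorProduct.lift.tmul, LinearMap.comp_apply, LinearEquiv.coe_coe,
    PiTensorProduct.lift.tprod]
  change F x _ = _
  apply hc
  intro l hl
  simp [e, hl]

variable [Module S N] [Module Sᵐᵒᵖ N]

/-- sequence part of a face -/
def fs (j : ℕ) (s : ℕ → S) : ℕ → S := fun l =>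
  if l + 1 < j then s l else if l + 1 = j then s l * s (l + 1) else s (l + 1)

/-- coefficient part of a face -/
def fx (n j : ℕ) (x : N) (s : ℕ → S) : N :=
  if j = 0 then op (s 0) • x else if j = n + 1 then s n • x else x

/-- sequence part of an insertion -/
def is (u v : S) (t : ℕ) (s : ℕ → S) : ℕ → S := fun l =>
  if l + 1 < t then s l else if l + 1 = t then s l * v else if l = t then u else s (l - 1)

def ix (v : S) (t : ℕ) (x : N) : N := if t = 0 then op v • x else x

variable [SMulCommClass S Sᵐᵒᵖ N] [IsScalarTower k S N] [IsScalarTower k Sᵐᵒᵖ N]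

/-- left and right actions as linear maps -/
noncomputable def lact (s : S) : N →ₗ[k] N := Algebra.lsmul k k N s
noncomputable def ract (s : S) : N →ₗ[k] N := Algebra.lsmul k k N (op s)

theorem exists_face (n j : ℕ) (hj : j ≤ n + 1) :
    ∃ L : HChain k S N (n + 1) →ₗ[k] HChain k S N n, ∀ x s,
      L (gg k (n + 1) x s) = gg k n (fx n j x s) (fs j s) := by
  apply exists_lin
  · intro x s t h
    apply gg_congr
    · simp only [fx]; rw [h 0 (by omega), h n (by omega)]
    · intro l hl
      simp only [fs]; rw [h l (by omega), h (l + 1) (by omega)]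
  · intro s
    rcases Nat.eq_zero_or_pos j with rfl | h0
    · exact ⟨ggx k n (fs 0 s) ∘ₗ ract k (s 0), fun x => rfl⟩
    · by_cases h1 : j = n + 1
      · exact ⟨ggx k n (fs j s) ∘ₗ lact k (s n), fun x => by
          simp [fx, h1, lact, ggx_apply]⟩
      · exact ⟨ggx k n (fs j s), fun x => by
          simp [fx, h1, h0.ne', ggx_apply]⟩
  · intro x s i hi
    by_cases c1 : i + 1 < j
    · refine ⟨ggs k n (fx n j x s) (fs j s) ⟨i, by omega⟩, fun c => ?_⟩
      rw [ggs_apply]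
      apply gg_congr
      · simp only [fx, Function.update_apply]; grind
      · intro l hl; simp only [fs, Function.update_apply]; grind
    by_cases c2 : j = 0 ∧ i = 0
    · obtain ⟨rfl, rfl⟩ := c2
      refine ⟨ggx k n (fs 0 s) ∘ₗ
        (LinearMap.toSpanSingleton Sᵐᵒᵖ N x).restrictScalars k ∘ₗ
          (MulOpposite.opLinearEquiv k).toLinearMap, fun c => ?_⟩
      simp only [LinearMap.comp_apply, ggx_apply]
      apply gg_congr
      · simp [fx]
      · intro l hl; simp [fs]
    by_cases c3 : j = n + 1 ∧ i = n
    · obtain ⟨rfl, rfl⟩ := c3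
      refine ⟨ggx k i (fs (i + 1) s) ∘ₗ
        (LinearMap.toSpanSingleton S N x).restrictScalars k, fun c => ?_⟩
      simp only [LinearMap.comp_apply, ggx_apply]
      apply gg_congr
      · simp [fx]
      · intro l hl; simp only [fs, Function.update_apply]; grind
    by_cases c4 : i + 1 = j
    · refine ⟨ggs k n (fx n j x s) (fs j s) ⟨i, by omega⟩ ∘ₗ LinearMap.mulRight k (s (i + 1)),
        fun c => ?_⟩
      rw [LinearMap.comp_apply, ggs_apply, LinearMap.mulRight_apply]
      apply gg_congr
      · simp only [fx, Function.update_apply]; grind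
      · intro l hl; simp only [fs, Function.update_apply]; grind
    by_cases c5 : i = j
    · refine ⟨ggs k n (fx n j x s) (fs j s) ⟨i - 1, by omega⟩ ∘ₗ LinearMap.mulLeft k (s (i - 1)),
        fun c => ?_⟩
      rw [LinearMap.comp_apply, ggs_apply, LinearMap.mulLeft_apply]
      apply gg_congr
      · simp only [fx, Function.update_apply]; grind
      · intro l hl; simp only [fs, Function.update_apply]; grind
    · refine ⟨ggs k n (fx n j x s) (fs j s) ⟨i - 1, by omega⟩, fun c => ?_⟩
      rw [ggs_apply]
      apply gg_congr
      · simp only [fx, Function.update_apply]; grind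
      · intro l hl; simp only [fs, Function.update_apply]; grind

theorem exists_ins (u v : S) (n t : ℕ) (ht : t ≤ n) :
    ∃ L : HChain k S N n →ₗ[k] HChain k S N (n + 1), ∀ x s,
      L (gg k n x s) = gg k (n + 1) (ix v t x) (is u v t s) := by
  apply exists_lin
  · intro x s s' h
    apply gg_congr
    · rfl
    · intro l hl
      simp only [is]; grind
  · intro s
    rcases Nat.eq_zero_or_pos t with rfl | h0
    · exact ⟨ggx k _ (is u v 0 s) ∘ₗ ract k v, fun x => rfl⟩
    · exact ⟨ggx k _ (is u v t s), fun x => by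
          simp [ix, h0.ne', ggx_apply]⟩
  · intro x s i hi
    by_cases c1 : i + 1 < t
    · refine ⟨ggs k _ (ix v t x) (is u v t s) ⟨i, by omega⟩, fun c => ?_⟩
      rw [ggs_apply]
      apply gg_congr k rfl
      intro l hl; simp only [is, Function.update_apply]; grind
    by_cases c4 : i + 1 = t
    · refine ⟨ggs k _ (ix v t x) (is u v t s) ⟨i, by omega⟩ ∘ₗ LinearMap.mulRight k v,
        fun c => ?_⟩
      rw [LinearMap.comp_apply, ggs_apply, LinearMap.mulRight_apply]
      apply gg_congr k rfl
      intro l hl; simp only [is, Function.update_apply]; grind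
    · refine ⟨ggs k _ (ix v t x) (is u v t s) ⟨i + 1, by omega⟩, fun c => ?_⟩
      rw [ggs_apply]
      apply gg_congr k rfl
      intro l hl; simp only [is, Function.update_apply]; grind


variable {A : Type u} [Fintype A] (u v : A → S)

/-- extension of a finite family of indices to all naturals -/
def ea {t : ℕ} (a : Fin (t + 1) → A) (l : ℕ) : A := if h : l < t + 1 then a ⟨l, h⟩ else a 0

def es {t : ℕ} (a : Fin (t + 1) → A) (s : ℕ → S) : ℕ → S := fun l =>
  if l < t then u (ea a l) * s l * v (ea a (l + 1)) else if l = t then u (ea a t) else s (l - 1)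


set_option linter.unusedSectionVars false

theorem fx_fx (n i j : ℕ) (x : N) (s : ℕ → S) (h1 : i ≤ j) (h2 : j ≤ n + 1) :
    fx n i (fx (n + 1) (j + 1) x s) (fs (j + 1) s) = fx n j (fx (n + 1) i x s) (fs i s) := by
  simp only [fx, fs]
  split_ifs <;> first | omega | contradiction | rfl | exact smul_comm _ _ _ | exact (smul_comm _ _ _).symm | (subst_vars; simp [smul_smul]; done)

theorem fs_fs (i j : ℕ) (s : ℕ → S) (h1 : i ≤ j) :
    fs i (fs (j + 1) s) = fs j (fs i s) := by
  funext l
  simp only [fs]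
  split_ifs <;> first | omega | rfl | simp only [mul_assoc]

theorem fx_ix1 (u v : S) (n j t : ℕ) (x : N) (s : ℕ → S) (h1 : j ≤ t) (h2 : t ≤ n) :
    fx (n + 1) j (ix v (t + 1) x) (is u v (t + 1) s) = ix v t (fx n j x s) := by
  simp only [fx, ix, is]
  split_ifs <;> first | omega | contradiction | rfl | exact smul_comm _ _ _ | exact (smul_comm _ _ _).symm | (subst_vars; simp [smul_smul]; done)

theorem fs_is1 (u v : S) (j t : ℕ) (s : ℕ → S) (h1 : j ≤ t) :
    fs j (is u v (t + 1) s) = is u v t (fs j s) := by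
  funext l
  simp only [fs, is]
  grind

theorem fx_ix2 (u v : S) (n j t : ℕ) (x : N) (s : ℕ → S) (h1 : t + 1 ≤ j) (h2 : j ≤ n + 1) :
    fx (n + 1) (j + 1) (ix v t x) (is u v t s) = ix v t (fx n j x s) := by
  simp only [fx, ix, is]
  split_ifs <;> first | omega | contradiction | rfl | exact smul_comm _ _ _ | exact (smul_comm _ _ _).symm | (subst_vars; simp [smul_smul]; done)

theorem fs_is2 (u v : S) (j t : ℕ) (s : ℕ → S) (h1 : t + 1 ≤ j) :
    fs (j + 1) (is u v t s) = is u v t (fs j s) := by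
  funext l
  simp only [fs, is]
  grind

theorem ea_snoc {A : Type*} {t : ℕ} (a : Fin (t + 1) → A) (b : A) (l : ℕ) :
    ea (Fin.snoc (α := fun _ : Fin (t + 2) => A) a b) l = if l = t + 1 then b else ea a l := by
  simp only [ea, Fin.snoc]
  split_ifs <;> first | omega | (simp; done) | (exfalso; simp_all; done)

theorem homotopy_S (huv : ∑ a, v a * u a = 1)
    (bS : ∀ n, HChain k S N (n + 1) →ₗ[k] HChain k S N n)
    (hbS : ∀ (n : ℕ) (m : N) (s : Fin (n + 1) → S),
      bS n (hgen k m s) =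
        hgen k (s (Fin.last n) • m) (Fin.init s)
          + ∑ j : Fin n, ((-1 : ℤ) ^ (n - j.val)) • hgen k m (mergeAt s j)
          + ((-1 : ℤ) ^ (n + 1)) • hgen k (op (s 0) • m) (Fin.tail s))
    (T : ∀ n, HChain k S N n →ₗ[k] HChain k S N n)
    (hT : ∀ (n : ℕ) (x : N) (s : Fin n → S), T n (hgen k x s) =
      ∑ f : Fin (n + 1) → A, hgen k (u (f 0) • op (v (f 1)) • x)
        (fun l : Fin n => u (f l.succ) * s l * v (f (l.succ + 1)))) :
    ∃ ht : ∀ n, HChain k S N n →ₗ[k] HChain k S N (n + 1),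
      (bS 0).comp (ht 0) = T 0 - LinearMap.id ∧
      ∀ n : ℕ, (bS (n + 1)).comp (ht (n + 1)) + (ht n).comp (bS n)
        = T (n + 1) - LinearMap.id := by
  have hd : ∀ n j, ∃ L : HChain k S N (n + 1) →ₗ[k] HChain k S N n, j ≤ n + 1 → ∀ x s,
      L (gg k (n + 1) x s) = gg k n (fx n j x s) (fs j s) := by
    intro n j
    by_cases h : j ≤ n + 1
    · obtain ⟨L, hL⟩ := exists_face k (S := S) (N := N) n j h
      exact ⟨L, fun _ => hL⟩
    · exact ⟨0, fun h' => absurd h' h⟩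
  choose d hd using hd
  have hi : ∀ n t a, ∃ L : HChain k S N n →ₗ[k] HChain k S N (n + 1), t ≤ n → ∀ x s,
      L (gg k n x s) = gg k (n + 1) (ix (v a) t x) (is (u a) (v a) t s) := by
    intro n t a
    by_cases h : t ≤ n
    · obtain ⟨L, hL⟩ := exists_ins k (N := N) (u a) (v a) n t h
      exact ⟨L, fun _ => hL⟩
    · exact ⟨0, fun h' => absurd h' h⟩
  choose σ' hσ' using hi
  let σ : ∀ n, ℕ → HChain k S N n →ₗ[k] HChain k S N (n + 1) := fun n t => ∑ a, σ' n t a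
  have hσ : ∀ n t, t ≤ n → ∀ x s, σ n t (gg k n x s) =
      ∑ a, gg k (n + 1) (ix (v a) t x) (is (u a) (v a) t s) := by
    intro n t h x s
    simp only [σ, LinearMap.sum_apply]
    exact Finset.sum_congr rfl fun a _ => hσ' n t a h x s
  have hdd : ∀ n i j z, i ≤ j → j ≤ n + 1 →
      d n i (d (n + 1) (j + 1) z) = d n j (d (n + 1) i z) := by
    intro n i j z h1 h2
    refine LinearMap.congr_fun (gg_span_ext k (d n i ∘ₗ d (n + 1) (j + 1))
      (d n j ∘ₗ d (n + 1) i) fun x s => ?_) z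
    simp only [LinearMap.comp_apply]
    rw [hd _ _ (by omega), hd _ _ (by omega), hd _ _ (by omega), hd _ _ (by omega)]
    rw [fx_fx _ _ _ _ _ h1 h2, fs_fs _ _ _ h1]
  have hd0 : ∀ n t z, t ≤ n → d n t (σ n t z) = z := by
    intro n t z h
    refine LinearMap.congr_fun (gg_span_ext k (d n t ∘ₗ σ n t) LinearMap.id fun x s => ?_) z
    simp only [LinearMap.comp_apply, LinearMap.id_apply]
    rw [hσ _ _ h, map_sum]
    simp only [hd n t (by omega)]
    rcases Nat.eq_zero_or_pos t with rfl | h0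
    · calc _ = ∑ a, ggx k n s (op (v a * u a) • x) := by
            refine Finset.sum_congr rfl fun a _ => ?_
            rw [ggx_apply]
            apply gg_congr
            · simp [fx, ix, is, smul_smul]
            · intro l hl; simp [fs, is]
        _ = _ := by
            rw [← map_sum, ← Finset.sum_smul, ← Finset.op_sum, huv, ggx_apply]; simp
    · calc _ = ∑ a, ggs k n x s ⟨t - 1, by omega⟩ (s (t - 1) * (v a * u a)) := by
            refine Finset.sum_congr rfl fun a _ => ?_
            rw [ggs_apply]
            apply gg_congr
            · simp only [fx, ix]; grind
            · intro l hl; simp only [fs, is, Function.update_apply]; grind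
        _ = _ := by
            rw [← map_sum, ← Finset.mul_sum, huv, ggs_apply]; simp
  have hd1 : ∀ n j t z, j ≤ t → t ≤ n →
      d (n + 1) j (σ (n + 1) (t + 1) z) = σ n t (d n j z) := by
    intro n j t z h1 h2
    refine LinearMap.congr_fun (gg_span_ext k (d (n + 1) j ∘ₗ σ (n + 1) (t + 1))
      (σ n t ∘ₗ d n j) fun x s => ?_) z
    simp only [LinearMap.comp_apply]
    rw [hσ _ _ (by omega), map_sum, hd _ _ (by omega), hσ _ _ h2]
    refine Finset.sum_congr rfl fun a _ => ?_
    rw [hd _ _ (by omega)]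
    rw [fx_ix1 _ _ _ _ _ _ _ h1 h2, fs_is1 _ _ _ _ _ h1]
  have hd2 : ∀ n j t z, t + 1 ≤ j → j ≤ n + 1 →
      d (n + 1) (j + 1) (σ (n + 1) t z) = σ n t (d n j z) := by
    intro n j t z h1 h2
    refine LinearMap.congr_fun (gg_span_ext k (d (n + 1) (j + 1) ∘ₗ σ (n + 1) t)
      (σ n t ∘ₗ d n j) fun x s => ?_) z
    simp only [LinearMap.comp_apply]
    rw [hσ _ _ (by omega), map_sum, hd _ _ (by omega), hσ _ _ (by omega)]
    refine Finset.sum_congr rfl fun a _ => ?_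
    rw [hd _ _ (by omega)]
    rw [fx_ix2 _ _ _ _ _ _ _ h1 h2, fs_is2 _ _ _ _ _ h1]
  have hform : ∀ t n, t ≤ n → ∀ x s, hh d σ t n (gg k n x s) =
      ∑ a : Fin (t + 1) → A, gg k (n + 1) (op (v (a 0)) • x) (es u v a s) := by
    intro t
    induction t with
    | zero =>
      intro n h x s
      rw [hh, hσ _ _ h]
      refine Fintype.sum_equiv (Equiv.funUnique (Fin 1) A).symm _ _ fun a => ?_
      apply gg_congr
      · simp [ix]
      · intro l hl; simp [is, es, ea]
    | succ t ih =>
      intro n h x s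
      rw [hh, LinearMap.comp_apply, LinearMap.comp_apply, ih n (by omega), map_sum, map_sum,
        ← (Fin.snocEquiv (fun _ : Fin (t + 2) => A)).sum_comp, Fintype.sum_prod_type,
        Finset.sum_comm]
      refine Finset.sum_congr rfl fun a _ => ?_
      rw [hd _ _ (by omega), hσ _ _ h]
      refine Finset.sum_congr rfl fun b _ => ?_
      apply gg_congr
      · have : (Fin.snocEquiv (fun _ : Fin (t + 2) => A)) (b, a) 0 = a 0 := by
          simp [Fin.snocEquiv, Fin.snoc]
        rw [this]
        simp only [ix, fx]
        split_ifs <;> first | omega | contradiction | rfl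
      · intro l hl
        change _ = es u v (Fin.snoc (α := fun _ : Fin (t + 2) => A) a b) s l
        simp only [is, es, fs, ea_snoc]
        grind
  have hlast : ∀ n z, d n (n + 1) (hh d σ n n z) = T n z := by
    intro n z
    refine LinearMap.congr_fun (gg_span_ext k (d n (n + 1) ∘ₗ hh d σ n n) (T n) fun x s => ?_) z
    rw [LinearMap.comp_apply, hform n n le_rfl, map_sum]
    conv_rhs => rw [gg, hT]
    symm
    refine Fintype.sum_equiv (Equiv.arrowCongr (Equiv.addRight (1 : Fin (n + 1))).symm (Equiv.refl A)) _ _ fun f => ?_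
    rw [hd _ _ le_rfl]
    have key : ∀ l (h : l < n + 1), ea ((Equiv.arrowCongr (Equiv.addRight (1 : Fin (n + 1))).symm
        (Equiv.refl A)) f) l = f (⟨l, h⟩ + 1) := by
      intro l h
      simp [ea, h]
    have hs : ∀ l : Fin n, (⟨l, by omega⟩ : Fin (n + 1)) + 1 = l.succ := by
      intro l
      exact Fin.coeSucc_eq_succ
    rw [gg]
    congr 1
    · simp only [fx, es]
      simp only [Nat.add_eq_zero_iff, one_ne_zero, and_false, if_false, if_true, lt_irrefl]
      rw [key n (by omega)]
      have : (⟨n, by omega⟩ : Fin (n + 1)) + 1 = 0 := Fin.last_add_one n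
      rw [this]
      simp
    · funext l
      have hl := l.2
      simp only [fs, es]
      rw [if_pos (by omega), if_pos (by omega), key l (by omega), key (l + 1) (by omega), hs]
      rfl
  have hb : ∀ n z, bS n z = ((-1 : ℤ) ^ (n + 1)) •
      ∑ j ∈ Finset.range (n + 2), ((-1 : ℤ) ^ j) • d n j z := by
    intro n z
    refine (LinearMap.congr_fun (gg_span_ext k (bS n) (((-1 : ℤ) ^ (n + 1)) •
      ∑ j ∈ Finset.range (n + 2), ((-1 : ℤ) ^ j) • d n j) fun x s => ?_) z).trans (by
        simp [LinearMap.sum_apply])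
    rw [gg, hbS]
    simp only [LinearMap.smul_apply, LinearMap.sum_apply]
    change _ = _ • ∑ j ∈ Finset.range (n + 2), _ • d n j (gg k (n + 1) x s)
    rw [Finset.sum_range_succ, Finset.sum_range_succ', smul_add, smul_add]
    have e1 : ((-1 : ℤ) ^ (n + 1)) • ((-1 : ℤ) ^ (n + 1)) • d n (n + 1) (gg k (n + 1) x s)
        = hgen k (s n • x) (Fin.init fun l : Fin (n + 1) => s l) := by
      rw [smul_smul, ← pow_add, Even.neg_one_pow ⟨n + 1, rfl⟩, one_smul, hd _ _ le_rfl]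
      simp only [fx, gg]
      rw [if_neg (by omega), if_pos trivial]
      congr 1
      funext l
      simp only [fs]
      rw [if_pos (by omega)]
      rfl
    have e2 : ((-1 : ℤ) ^ (n + 1)) • ((-1 : ℤ) ^ 0) • d n 0 (gg k (n + 1) x s)
        = ((-1 : ℤ) ^ (n + 1)) • hgen k (op (s 0) • x) (Fin.tail fun l : Fin (n + 1) => s l) := by
      rw [pow_zero, one_smul, hd _ _ (by omega)]
      rfl
    have e3 : ((-1 : ℤ) ^ (n + 1)) • ∑ j ∈ Finset.range n, ((-1 : ℤ) ^ (j + 1)) •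
          d n (j + 1) (gg k (n + 1) x s)
        = ∑ j : Fin n, ((-1 : ℤ) ^ (n - j.val)) •
          hgen k x (mergeAt (fun l : Fin (n + 1) => s l) j) := by
      rw [Finset.smul_sum, Finset.sum_range]
      refine Finset.sum_congr rfl fun j _ => ?_
      have hj := j.2
      rw [smul_smul, ← pow_add, hd _ _ (by omega)]
      congr 1
      · rw [show n + 1 + (j.val + 1) = 2 * (j.val + 1) + (n - j.val) by omega, pow_add, pow_mul]
        simp
      · simp only [gg, fx]
        rw [if_neg (by omega), if_neg (by omega)]
        congr 1
        funext l
        simp [fs, mergeAt]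
    rw [e1, e2, e3]
    simp only [Fin.val_last, Fin.val_zero]
    abel
  have hpull : ∀ n (c : ℤ) (z : HChain k S N (n + 1)),
      ∑ j ∈ Finset.range (n + 2), ((-1 : ℤ) ^ j) • d n j (c • z)
        = c • ∑ j ∈ Finset.range (n + 2), ((-1 : ℤ) ^ j) • d n j z := by
    intro n c z
    rw [Finset.smul_sum]
    refine Finset.sum_congr rfl fun j _ => ?_
    rw [map_zsmul, smul_comm]
  have hpull2 : ∀ n (c : ℤ) (z : HChain k S N n),
      ∑ t ∈ Finset.range (n + 1), ((-1 : ℤ) ^ t) • hh d σ t n (c • z)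
        = c • ∑ t ∈ Finset.range (n + 1), ((-1 : ℤ) ^ t) • hh d σ t n z := by
    intro n c z
    rw [Finset.smul_sum]
    refine Finset.sum_congr rfl fun j _ => ?_
    rw [map_zsmul, smul_comm]
  refine ⟨fun n => ((-1 : ℤ) ^ n) • ∑ t ∈ Finset.range (n + 1), ((-1 : ℤ) ^ t) • hh d σ t n, ?_, ?_⟩
  · refine LinearMap.ext fun z => ?_
    have h0 : d 0 0 (hh d σ 0 0 z) = z := hd0 0 0 z le_rfl
    have h1 := hlast 0 z
    simp only [LinearMap.comp_apply, LinearMap.smul_apply, LinearMap.sub_apply,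
      LinearMap.id_apply, LinearMap.sum_apply, hb, hpull]
    simp only [zero_add, Finset.sum_range_succ, Finset.sum_range_zero, pow_zero, one_smul, pow_one]
    rw [h0, ← h1]
    simp only [neg_smul, one_smul, zero_add]
    abel
  · intro n
    refine LinearMap.ext fun z => ?_
    have := homotopy_aux d σ hdd hd0 hd1 hd2 n z
    rw [hlast] at this
    simp only [LinearMap.add_apply, LinearMap.comp_apply, LinearMap.smul_apply, LinearMap.sub_apply,
      LinearMap.id_apply, LinearMap.sum_apply, hb, hpull, hpull2, smul_smul, ← pow_add]
    rw [Odd.neg_one_pow ⟨n + 1, by ring⟩, Odd.neg_one_pow ⟨n, by ring⟩, ← smul_add, this]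
    simp

end ops
/-- Let `(R, S, P, Q, φ, ψ)` be a Morita context over `k` and `M` an
`(R,R)`-bimodule with symmetric `k`-action.  Then the composite `θ_• ∘ γ_•` is chain
homotopic to the identity of `C_•(S, M̃)`:  there exist `k`-linear maps
`h̃_n : C_n(S, M̃) → C_{n+1}(S, M̃)` with `b ∘ h̃_0 = θ_0 ∘ γ_0 − id` and
`b ∘ h̃_n + h̃_{n−1} ∘ b = θ_n ∘ γ_n − id` for all `n ≥ 1`. -/
theorem theta_gamma_homotopic_id
    (k R S P Q M Mt : Type u) [CommRing k] [Ring R] [Ring S] [Algebra k R] [Algebra k S]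
    [AddCommGroup P] [Module k P] [Module S P] [Module Rᵐᵒᵖ P]
    [SMulCommClass S Rᵐᵒᵖ P] [IsScalarTower k S P] [IsScalarTower k Rᵐᵒᵖ P]
    [AddCommGroup Q] [Module k Q] [Module R Q] [Module Sᵐᵒᵖ Q]
    [SMulCommClass R Sᵐᵒᵖ Q] [IsScalarTower k R Q] [IsScalarTower k Sᵐᵒᵖ Q]
    [AddCommGroup M] [Module k M] [Module R M] [Module Rᵐᵒᵖ M]
    [SMulCommClass R Rᵐᵒᵖ M] [IsScalarTower k R M] [IsScalarTower k Rᵐᵒᵖ M]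
    [AddCommGroup Mt] [Module k Mt] [Module S Mt] [Module Sᵐᵒᵖ Mt]
    [SMulCommClass S Sᵐᵒᵖ Mt] [IsScalarTower k S Mt] [IsScalarTower k Sᵐᵒᵖ Mt]
    -- the Morita context and the fixed finite families with `Σⱼ φ(p'ⱼ ⊗ q'ⱼ) = 1_S`
    -- and `Σᵢ ψ(qᵢ ⊗ pᵢ) = 1_R`
    (ctx : MoritaContext k R S P Q)
    (ι κ : Type u) [Fintype ι] [Fintype κ]
    (pI : ι → P) (qI : ι → Q) (pJ : κ → P) (qJ : κ → Q)
    (hI : ∑ i : ι, ctx.ψ (qI i) (pI i) = 1)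
    (hJ : ∑ j : κ, ctx.φ (pJ j) (qJ j) = 1)
    -- `Mt` plays the role of `M̃ = P ⊗_R M ⊗_R Q`, with `emb p m q` the class of
    -- `p ⊗ m ⊗ q`; it is an `(S,S)`-bimodule spanned by these classes, the `S`-actions
    -- being `s·(p ⊗ m ⊗ q)·s' = (s·p) ⊗ m ⊗ (q·s')`, and the tensor products are
    -- balanced over `R`
    (emb : P →ₗ[k] M →ₗ[k] Q →ₗ[k] Mt)
    (hemb_bal₁ : ∀ (r : R) (p : P) (m : M) (q : Q), emb (op r • p) m q = emb p (r • m) q)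
    (hemb_bal₂ : ∀ (r : R) (p : P) (m : M) (q : Q), emb p (op r • m) q = emb p m (r • q))
    (hemb_left : ∀ (s : S) (p : P) (m : M) (q : Q), emb (s • p) m q = s • emb p m q)
    (hemb_right : ∀ (s : S) (p : P) (m : M) (q : Q), emb p m (op s • q) = op s • emb p m q)
    (hemb_span : Submodule.span k {x : Mt | ∃ (p : P) (m : M) (q : Q), emb p m q = x} = ⊤)
    -- the Hochschild boundaries of `C_•(R, M)` and `C_•(S, M̃)`
    (bR : ∀ n, HChain k R M (n + 1) →ₗ[k] HChain k R M n)
    (hbR : ∀ (n : ℕ) (m : M) (r : Fin (n + 1) → R),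
      bR n (hgen k m r) =
        hgen k (r (Fin.last n) • m) (Fin.init r)
          + ∑ j : Fin n, ((-1 : ℤ) ^ (n - j.val)) • hgen k m (mergeAt r j)
          + ((-1 : ℤ) ^ (n + 1)) • hgen k (op (r 0) • m) (Fin.tail r))
    (bS : ∀ n, HChain k S Mt (n + 1) →ₗ[k] HChain k S Mt n)
    (hbS : ∀ (n : ℕ) (m : Mt) (s : Fin (n + 1) → S),
      bS n (hgen k m s) =
        hgen k (s (Fin.last n) • m) (Fin.init s)
          + ∑ j : Fin n, ((-1 : ℤ) ^ (n - j.val)) • hgen k m (mergeAt s j)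
          + ((-1 : ℤ) ^ (n + 1)) • hgen k (op (s 0) • m) (Fin.tail s))
    -- the chain map `θ_•`
    (θ : ∀ n, HChain k R M n →ₗ[k] HChain k S Mt n)
    (hθ : ∀ (n : ℕ) (m : M) (r : Fin n → R),
      θ n (hgen k m r) =
        ∑ f : Fin (n + 1) → ι,
          hgen k (emb (pI (f 0)) m (qI (f 1)))
            (fun l : Fin n => ctx.φ (pI (f l.succ)) (r l • qI (f (l.succ + 1)))))
    -- the chain map `γ_•`
    (γ : ∀ n, HChain k S Mt n →ₗ[k] HChain k R M n)
    (hγ : ∀ (n : ℕ) (p : P) (m : M) (q : Q) (s : Fin n → S),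
      γ n (hgen k (emb p m q) s) =
        ∑ g : Fin (n + 1) → κ,
          hgen k (ctx.ψ (qJ (g 0)) p • (op (ctx.ψ q (pJ (g 1))) • m))
            (fun l : Fin n => ctx.ψ (qJ (g l.succ)) (s l • pJ (g (l.succ + 1)))))
 :
    ∃ ht : ∀ n, HChain k S Mt n →ₗ[k] HChain k S Mt (n + 1),
      (bS 0).comp (ht 0) = (θ 0).comp (γ 0) - LinearMap.id ∧
      ∀ n : ℕ, (bS (n + 1)).comp (ht (n + 1)) + (ht n).comp (bS n)
        = (θ (n + 1)).comp (γ (n + 1)) - LinearMap.id := by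
  have huv : ∑ a : ι × κ, ctx.φ (pJ a.2) (qI a.1) * ctx.φ (pI a.1) (qJ a.2) = 1 := by
    rw [← hJ, Fintype.sum_prod_type_right]
    refine Finset.sum_congr rfl fun j _ => ?_
    calc _ = ∑ i, ctx.φ (pJ j) (ctx.ψ (qI i) (pI i) • qJ j) := by
          refine Finset.sum_congr rfl fun i _ => ?_
          rw [ctx.assoc_ψφ, ctx.φ_right]
      _ = _ := by rw [← map_sum, ← Finset.sum_smul, hI, one_smul]
  refine homotopy_S k (fun a : ι × κ => ctx.φ (pI a.1) (qJ a.2))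
    (fun a => ctx.φ (pJ a.2) (qI a.1)) huv bS hbS (fun n => (θ n).comp (γ n)) ?_
  intro n x s
  have hbal : ∀ (p : P) (r : R) (q : Q), ctx.φ (op r • p) q = ctx.φ p (r • q) := by
    intro p r q
    have hmem : (op r • p) ⊗ₜ[k] q - p ⊗ₜ[k] (r • q) ∈ LinearMap.ker (TensorProduct.lift ctx.φ) := by
      rw [ctx.φ_ker]
      exact Submodule.subset_span ⟨p, r, q, rfl⟩
    rw [LinearMap.mem_ker, map_sub, sub_eq_zero] at hmem
    simpa using hmem
  have main : ∀ (t : Fin n → S), ((θ n).comp (γ n)).comp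
        ((TensorProduct.mk k Mt _).flip (PiTensorProduct.tprod k t))
      = ∑ f : Fin (n + 1) → ι × κ, ((TensorProduct.mk k Mt _).flip (PiTensorProduct.tprod k
          (fun l : Fin n => ctx.φ (pI (f l.succ).1) (qJ (f l.succ).2) * t l *
            ctx.φ (pJ (f (l.succ + 1)).2) (qI (f (l.succ + 1)).1)))) ∘ₗ
          lact k (ctx.φ (pI (f 0).1) (qJ (f 0).2)) ∘ₗ
          ract k (ctx.φ (pJ (f 1).2) (qI (f 1).1)) := by
    intro t
    refine LinearMap.ext_on hemb_span ?_
    rintro _ ⟨p, m, q, rfl⟩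
    simp only [LinearMap.comp_apply, LinearMap.sum_apply]
    change θ n (γ n (hgen k (emb p m q) t)) = _
    rw [hγ, map_sum]
    simp only [hθ]
    rw [← (Equiv.arrowProdEquivProdArrow (Fin (n + 1)) (fun _ => ι) (fun _ => κ)).symm.sum_comp,
      Fintype.sum_prod_type_right]
    refine Finset.sum_congr rfl fun g _ => Finset.sum_congr rfl fun f _ => ?_
    change _ = hgen k (ctx.φ (pI (f 0)) (qJ (g 0)) • op (ctx.φ (pJ (g 1)) (qI (f 1))) • emb p m q)
      (fun l : Fin n => ctx.φ (pI (f l.succ)) (qJ (g l.succ)) * t l *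
            ctx.φ (pJ (g (l.succ + 1))) (qI (f (l.succ + 1))))
    congr 1
    · rw [← hemb_bal₁, hemb_bal₂, ← ctx.assoc_φψ, ctx.assoc_ψφ, hemb_left, hemb_right]
    · funext l
      rw [ctx.assoc_ψφ, ctx.φ_right, ctx.φ_left, mul_assoc]
  have := LinearMap.congr_fun (main s) x
  simp only [LinearMap.sum_apply] at this
  exact this
end

section
/- Let (R,S,P,Q,φ,ψ) be a Morita context over k. View θ and γ in the case M = R as maps θ_n : R^{⊗(n+1)} → S^{⊗(n+1)}, θ_n(r_0 ⊗ ⋯ ⊗ r_n) = Σ_{i_0,…,i_n} φ(p_{i_0}·r_0 ⊗ q_{i_1}) ⊗ φ(p_{i_1}·r_1 ⊗ q_{i_2}) ⊗ ⋯ ⊗ φ(p_{i_n}·r_n ⊗ q_{i_0}), and γ_n : S^{⊗(n+1)} → R^{⊗(n+1)}, γ_n(s_0 ⊗ ⋯ ⊗ s_n) = Σ_{j_0,…,j_n} ψ(q'_{j_0} ⊗ s_0·p'_{j_1}) ⊗ ψ(q'_{j_1} ⊗ s_1·p'_{j_2}) ⊗ ⋯ ⊗ ψ(q'_{j_n} ⊗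 s_n·p'_{j_0}). Then θ and γ commute with the cyclic operators: θ_n ∘ t_n = t_n ∘ θ_n and γ_n ∘ t_n = t_n ∘ γ_n for all n ≥ 0, where t_n(a_0 ⊗ a_1 ⊗ ⋯ ⊗ a_n) := a_1 ⊗ ⋯ ⊗ a_n ⊗ a_0 denotes the cyclic operator on A^{⊗_k(n+1)} for A = R and A = S respectively. -/
open scoped TensorProduct
open MulOpposite

universe u

section Cyclic

variable (k : Type u) [CommRing k]

/-- The `k`-module `A^{⊗_k (n+1)}` underlying the cyclic module of a `k`-algebra `A`. -/
abbrev CycChain (A : Type u) [Ring A] [Algebra k A] (n : ℕ) :=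
  PiTensorProduct k (fun _ : Fin (n + 1) => A)

/-- The generator `r₀ ⊗ r₁ ⊗ ⋯ ⊗ rₙ` of `A^{⊗_k (n+1)}`. -/
noncomputable def cgen {A : Type u} [Ring A] [Algebra k A] {n : ℕ}
    (r : Fin (n + 1) → A) : CycChain k A n :=
  PiTensorProduct.tprod k r

end Cyclic

/-- Let `(R, S, P, Q, φ, ψ)` be a Morita context over `k`.  In the case
`M = R`, view `θ` and `γ` as maps `θ_n : R^{⊗(n+1)} → S^{⊗(n+1)}`,
`θ_n (r₀ ⊗ ⋯ ⊗ r_n) = Σ_{i₀,…,i_n} φ(p_{i₀}·r₀ ⊗ q_{i₁}) ⊗ ⋯ ⊗ φ(p_{i_n}·r_n ⊗ q_{i₀})`, and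
`γ_n : S^{⊗(n+1)} → R^{⊗(n+1)}`,
`γ_n (s₀ ⊗ ⋯ ⊗ s_n) = Σ_{j₀,…,j_n} ψ(q'_{j₀} ⊗ s₀·p'_{j₁}) ⊗ ⋯ ⊗ ψ(q'_{j_n} ⊗ s_n·p'_{j₀})`
(indices taken cyclically).  Then `θ` and `γ` commute with the cyclic operators
`t_n (a₀ ⊗ ⋯ ⊗ a_n) = a₁ ⊗ ⋯ ⊗ a_n ⊗ a₀`:  `θ_n ∘ t_n = t_n ∘ θ_n` and
`γ_n ∘ t_n = t_n ∘ γ_n` for all `n ≥ 0`. -/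
theorem theta_gamma_commute_with_cyclic_operator
    (k R S P Q : Type u) [CommRing k] [Ring R] [Ring S] [Algebra k R] [Algebra k S]
    [AddCommGroup P] [Module k P] [Module S P] [Module Rᵐᵒᵖ P]
    [SMulCommClass S Rᵐᵒᵖ P] [IsScalarTower k S P] [IsScalarTower k Rᵐᵒᵖ P]
    [AddCommGroup Q] [Module k Q] [Module R Q] [Module Sᵐᵒᵖ Q]
    [SMulCommClass R Sᵐᵒᵖ Q] [IsScalarTower k R Q] [IsScalarTower k Sᵐᵒᵖ Q]
    (ctx : MoritaContext k R S P Q)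
    (ι κ : Type u) [Fintype ι] [Fintype κ]
    (pI : ι → P) (qI : ι → Q) (pJ : κ → P) (qJ : κ → Q)
    (hI : ∑ i : ι, ctx.ψ (qI i) (pI i) = 1)
    (hJ : ∑ j : κ, ctx.φ (pJ j) (qJ j) = 1)
    -- `θ_•` and `γ_•` in the case `M = R`
    (θ : ∀ n, CycChain k R n →ₗ[k] CycChain k S n)
    (hθ : ∀ (n : ℕ) (r : Fin (n + 1) → R),
      θ n (cgen k r) =
        ∑ f : Fin (n + 1) → ι,
          cgen k (fun l => ctx.φ (op (r l) • pI (f l)) (qI (f (l + 1)))))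
    (γ : ∀ n, CycChain k S n →ₗ[k] CycChain k R n)
    (hγ : ∀ (n : ℕ) (s : Fin (n + 1) → S),
      γ n (cgen k s) =
        ∑ g : Fin (n + 1) → κ,
          cgen k (fun l => ctx.ψ (qJ (g l)) (s l • pJ (g (l + 1)))))
    -- the cyclic operators on `R^{⊗(n+1)}` and `S^{⊗(n+1)}`
    (tR : ∀ n, CycChain k R n →ₗ[k] CycChain k R n)
    (htR : ∀ (n : ℕ) (r : Fin (n + 1) → R), tR n (cgen k r) = cgen k (fun l => r (l + 1)))
    (tS : ∀ n, CycChain k S n →ₗ[k] CycChain k S n)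
    (htS : ∀ (n : ℕ) (s : Fin (n + 1) → S), tS n (cgen k s) = cgen k (fun l => s (l + 1))) :
    ∀ n : ℕ, (θ n).comp (tR n) = (tS n).comp (θ n) ∧
      (γ n).comp (tS n) = (tR n).comp (γ n) := by
  intro n
  constructor
  · refine PiTensorProduct.ext (MultilinearMap.ext fun r => ?_)
    change θ n (tR n (cgen k r)) = tS n (θ n (cgen k r))
    rw [htR, hθ, hθ, map_sum]
    simp only [htS]
    symm
    exact Fintype.sum_equiv ((Equiv.addRight (1 : Fin (n + 1))).symm.arrowCongr (Equiv.refl ι))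
      _ _ (fun f => rfl)
  · refine PiTensorProduct.ext (MultilinearMap.ext fun s => ?_)
    change γ n (tS n (cgen k s)) = tR n (γ n (cgen k s))
    rw [htS, hγ, hγ, map_sum]
    simp only [htR]
    symm
    exact Fintype.sum_equiv ((Equiv.addRight (1 : Fin (n + 1))).symm.arrowCongr (Equiv.refl κ))
      _ _ (fun g => rfl)
end

section
/- Let (R,S,P,Q,φ,ψ) be a Morita context over k, and let X and Y be (S,S)-bimodules with symmetric k-action. Then the map ((q ⊗ x ⊗ p) ⊗ (q' ⊗ y ⊗ p')) ↦ q ⊗ (x·φ(p ⊗ q') ⊗ y) ⊗ p' defines a well-defined isomorphism of (R,R)-bimodules (Q ⊗_S X ⊗_S P) ⊗_R (Q ⊗_S Y ⊗_S P) → Q ⊗_S (X ⊗_S Y) ⊗_S P, with inverse given by q ⊗ (x ⊗ y) ⊗ p ↦ Σ_j (q ⊗ x ⊗ p'_j) ⊗ (q'_j ⊗ y ⊗ p). -/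
open scoped TensorProduct
open MulOpposite

set_option maxSynthPendingDepth 5

universe u

section TensorSix

variable (k R S P Q X Y : Type u) [CommRing k] [Ring R] [Ring S] [Algebra k R] [Algebra k S]
    [AddCommGroup P] [Module k P] [Module S P] [Module Rᵐᵒᵖ P]
    [AddCommGroup Q] [Module k Q] [Module R Q] [Module Sᵐᵒᵖ Q]
    [AddCommGroup X] [Module k X] [Module S X] [Module Sᵐᵒᵖ X]
    [AddCommGroup Y] [Module k Y] [Module S Y] [Module Sᵐᵒᵖ Y]

/-- The `k`-tensor product `Q ⊗ X ⊗ P ⊗ Q ⊗ Y ⊗ P` underlying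
`(Q ⊗_S X ⊗_S P) ⊗_R (Q ⊗_S Y ⊗_S P)`. -/
abbrev SixFold :=
  Q ⊗[k] (X ⊗[k] (P ⊗[k] (Q ⊗[k] (Y ⊗[k] P))))

/-- The balancing relations realizing `(Q ⊗_S X ⊗_S P) ⊗_R (Q ⊗_S Y ⊗_S P)` as a quotient of
the six-fold `k`-tensor product: `S`-balancing at the four junctions `Q–X`, `X–P`, `Q–Y`,
`Y–P` and `R`-balancing at the middle junction `P–Q`. -/
def sixRel : Submodule k (SixFold k P Q X Y) :=
  Submodule.span k
    ({z | ∃ (s : S) (q : Q) (x : X) (p : P) (q' : Q) (y : Y) (p' : P),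
        z = (op s • q) ⊗ₜ[k] (x ⊗ₜ[k] (p ⊗ₜ[k] (q' ⊗ₜ[k] (y ⊗ₜ[k] p'))))
          - q ⊗ₜ[k] ((s • x) ⊗ₜ[k] (p ⊗ₜ[k] (q' ⊗ₜ[k] (y ⊗ₜ[k] p'))))} ∪
     {z | ∃ (s : S) (q : Q) (x : X) (p : P) (q' : Q) (y : Y) (p' : P),
        z = q ⊗ₜ[k] ((op s • x) ⊗ₜ[k] (p ⊗ₜ[k] (q' ⊗ₜ[k] (y ⊗ₜ[k] p'))))
          - q ⊗ₜ[k] (x ⊗ₜ[k] ((s • p) ⊗ₜ[k] (q' ⊗ₜ[k] (y ⊗ₜ[k] p'))))} ∪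
     {z | ∃ (r : R) (q : Q) (x : X) (p : P) (q' : Q) (y : Y) (p' : P),
        z = q ⊗ₜ[k] (x ⊗ₜ[k] ((op r • p) ⊗ₜ[k] (q' ⊗ₜ[k] (y ⊗ₜ[k] p'))))
          - q ⊗ₜ[k] (x ⊗ₜ[k] (p ⊗ₜ[k] ((r • q') ⊗ₜ[k] (y ⊗ₜ[k] p'))))} ∪
     {z | ∃ (s : S) (q : Q) (x : X) (p : P) (q' : Q) (y : Y) (p' : P),
        z = q ⊗ₜ[k] (x ⊗ₜ[k] (p ⊗ₜ[k] ((op s • q') ⊗ₜ[k] (y ⊗ₜ[k] p'))))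
          - q ⊗ₜ[k] (x ⊗ₜ[k] (p ⊗ₜ[k] (q' ⊗ₜ[k] ((s • y) ⊗ₜ[k] p'))))} ∪
     {z | ∃ (s : S) (q : Q) (x : X) (p : P) (q' : Q) (y : Y) (p' : P),
        z = q ⊗ₜ[k] (x ⊗ₜ[k] (p ⊗ₜ[k] (q' ⊗ₜ[k] ((op s • y) ⊗ₜ[k] p'))))
          - q ⊗ₜ[k] (x ⊗ₜ[k] (p ⊗ₜ[k] (q' ⊗ₜ[k] (y ⊗ₜ[k] (s • p')))))})

/-- The `k`-tensor product `Q ⊗ (X ⊗ Y) ⊗ P` underlying `Q ⊗_S (X ⊗_S Y) ⊗_S P`. -/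
abbrev ThreeFold := Q ⊗[k] ((X ⊗[k] Y) ⊗[k] P)

/-- The balancing relations realizing `Q ⊗_S (X ⊗_S Y) ⊗_S P` as a quotient of
`Q ⊗[k] ((X ⊗[k] Y) ⊗[k] P)`. -/
def threeRel : Submodule k (ThreeFold k P Q X Y) :=
  Submodule.span k
    ({z | ∃ (s : S) (q : Q) (x : X) (y : Y) (p : P),
        z = (op s • q) ⊗ₜ[k] ((x ⊗ₜ[k] y) ⊗ₜ[k] p)
          - q ⊗ₜ[k] (((s • x) ⊗ₜ[k] y) ⊗ₜ[k] p)} ∪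
     {z | ∃ (s : S) (q : Q) (x : X) (y : Y) (p : P),
        z = q ⊗ₜ[k] (((op s • x) ⊗ₜ[k] y) ⊗ₜ[k] p)
          - q ⊗ₜ[k] ((x ⊗ₜ[k] (s • y)) ⊗ₜ[k] p)} ∪
     {z | ∃ (s : S) (q : Q) (x : X) (y : Y) (p : P),
        z = q ⊗ₜ[k] ((x ⊗ₜ[k] (op s • y)) ⊗ₜ[k] p)
          - q ⊗ₜ[k] ((x ⊗ₜ[k] y) ⊗ₜ[k] (s • p))})

end TensorSix

section Helpers

variable {k R S P Q X Y : Type u} [CommRing k] [Ring R] [Ring S] [Algebra k R] [Algebra k S]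
    [AddCommGroup P] [Module k P] [Module S P] [Module Rᵐᵒᵖ P]
    [AddCommGroup Q] [Module k Q] [Module R Q] [Module Sᵐᵒᵖ Q]
    [AddCommGroup X] [Module k X] [Module S X] [Module Sᵐᵒᵖ X]
    [AddCommGroup Y] [Module k Y] [Module S Y] [Module Sᵐᵒᵖ Y]

/-- insert the middle `P ⊗ Q` factor -/
noncomputable def midIns (q : Q) (x : X) (y : Y) (p' : P) :
    (P ⊗[k] Q) →ₗ[k] SixFold k P Q X Y :=
  (TensorProduct.mk k Q (X ⊗[k] (P ⊗[k] (Q ⊗[k] (Y ⊗[k] P)))) q) ∘ₗ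
    (TensorProduct.mk k X (P ⊗[k] (Q ⊗[k] (Y ⊗[k] P))) x) ∘ₗ
    (TensorProduct.assoc k P Q (Y ⊗[k] P)).toLinearMap ∘ₗ
    ((TensorProduct.mk k (P ⊗[k] Q) (Y ⊗[k] P)).flip (y ⊗ₜ[k] p'))

theorem midIns_tmul (q : Q) (x : X) (y : Y) (p' : P) (p : P) (q' : Q) :
    midIns (k := k) q x y p' (p ⊗ₜ[k] q') =
      q ⊗ₜ[k] (x ⊗ₜ[k] (p ⊗ₜ[k] (q' ⊗ₜ[k] (y ⊗ₜ[k] p')))) := rfl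

theorem midIns_mem (q : Q) (x : X) (y : Y) (p' : P) (t : P ⊗[k] Q)
    (ht : t ∈ midRel k R P Q) :
    midIns q x y p' t ∈ sixRel k R S P Q X Y := by
  have h : midRel k R P Q ≤ (sixRel k R S P Q X Y).comap (midIns q x y p') := by
    unfold midRel
    rw [Submodule.span_le]
    rintro _ ⟨m, a, n, rfl⟩
    simp only [Submodule.comap_coe, Set.mem_preimage, map_sub, midIns_tmul, SetLike.mem_coe]
    exact Submodule.subset_span (Or.inl (Or.inl (Or.inr ⟨a, q, x, m, n, y, p', rfl⟩)))
  exact h ht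

variable (k S X) in
/-- right action of `S` on `X` -/
noncomputable def ractX [IsScalarTower k Sᵐᵒᵖ X] : (X ⊗[k] S) →ₗ[k] X :=
  TensorProduct.lift
    (((Algebra.lsmul k k X).toLinearMap ∘ₗ (opLinearEquiv k (M := S)).toLinearMap).flip)

/-- forward map before quotients -/
noncomputable def fwd [IsScalarTower k Sᵐᵒᵖ X] (φ : P →ₗ[k] Q →ₗ[k] S) :
    SixFold k P Q X Y →ₗ[k] ThreeFold k P Q X Y :=
  LinearMap.lTensor Q
    ((TensorProduct.assoc k X Y P).symm.toLinearMap ∘ₗ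
     LinearMap.rTensor (Y ⊗[k] P) (ractX k S X) ∘ₗ
     (TensorProduct.assoc k X S (Y ⊗[k] P)).symm.toLinearMap ∘ₗ
     LinearMap.lTensor X (LinearMap.rTensor (Y ⊗[k] P) (TensorProduct.lift φ) ∘ₗ
      (TensorProduct.assoc k P Q (Y ⊗[k] P)).symm.toLinearMap))

theorem fwd_tmul [IsScalarTower k Sᵐᵒᵖ X] (φ : P →ₗ[k] Q →ₗ[k] S)
    (q : Q) (x : X) (p : P) (q' : Q) (y : Y) (p' : P) :
    fwd φ (q ⊗ₜ[k] (x ⊗ₜ[k] (p ⊗ₜ[k] (q' ⊗ₜ[k] (y ⊗ₜ[k] p'))))) =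
      q ⊗ₜ[k] (((op (φ p q') • x) ⊗ₜ[k] y) ⊗ₜ[k] p') := by
  rfl

/-- backward map before quotients -/
noncomputable def bwd {κ : Type u} [Fintype κ] (pJ : κ → P) (qJ : κ → Q) :
    ThreeFold k P Q X Y →ₗ[k] SixFold k P Q X Y :=
  LinearMap.lTensor Q
    (LinearMap.lTensor X
      (∑ j : κ, (TensorProduct.mk k P (Q ⊗[k] (Y ⊗[k] P)) (pJ j)) ∘ₗ
        (TensorProduct.mk k Q (Y ⊗[k] P) (qJ j))) ∘ₗ
     (TensorProduct.assoc k X Y P).toLinearMap)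

theorem bwd_tmul {κ : Type u} [Fintype κ] (pJ : κ → P) (qJ : κ → Q)
    (q : Q) (x : X) (y : Y) (p : P) :
    bwd pJ qJ (q ⊗ₜ[k] ((x ⊗ₜ[k] y) ⊗ₜ[k] p)) =
      midIns q x y p (∑ j : κ, pJ j ⊗ₜ[k] qJ j) := by
  simp [bwd, midIns_tmul, TensorProduct.tmul_sum]

theorem six_ext {M : Type u} [AddCommGroup M] [Module k M]
    {f g : (SixFold k P Q X Y ⧸ sixRel k R S P Q X Y) →ₗ[k] M}
    (h : ∀ (q : Q) (x : X) (p : P) (q' : Q) (y : Y) (p' : P),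
      f (Submodule.Quotient.mk (q ⊗ₜ[k] (x ⊗ₜ[k] (p ⊗ₜ[k] (q' ⊗ₜ[k] (y ⊗ₜ[k] p')))))) =
      g (Submodule.Quotient.mk (q ⊗ₜ[k] (x ⊗ₜ[k] (p ⊗ₜ[k] (q' ⊗ₜ[k] (y ⊗ₜ[k] p'))))))) :
    f = g := by
  apply Submodule.linearMap_qext
  apply TensorProduct.ext
  ext q : 1
  apply TensorProduct.ext
  ext x : 1
  apply TensorProduct.ext
  ext p : 1
  apply TensorProduct.ext
  ext q' : 1
  apply TensorProduct.ext
  ext y p'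
  exact h q x p q' y p'

theorem three_ext {M : Type u} [AddCommGroup M] [Module k M]
    {f g : (ThreeFold k P Q X Y ⧸ threeRel k S P Q X Y) →ₗ[k] M}
    (h : ∀ (q : Q) (x : X) (y : Y) (p : P),
      f (Submodule.Quotient.mk (q ⊗ₜ[k] ((x ⊗ₜ[k] y) ⊗ₜ[k] p))) =
      g (Submodule.Quotient.mk (q ⊗ₜ[k] ((x ⊗ₜ[k] y) ⊗ₜ[k] p)))) :
    f = g := by
  apply Submodule.linearMap_qext
  apply TensorProduct.ext
  ext q : 1
  apply TensorProduct.ext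
  apply TensorProduct.ext
  ext x y p
  exact h q x y p

theorem midIns_xs (q : Q) (x : X) (y : Y) (p' : P) (s : S) {κ : Type u} [Fintype κ]
    (pJ : κ → P) (qJ : κ → Q) :
    midIns q (op s • x) y p' (∑ j : κ, pJ j ⊗ₜ[k] qJ j)
      - midIns q x y p' (∑ j : κ, (s • pJ j) ⊗ₜ[k] qJ j) ∈ sixRel k R S P Q X Y := by
  simp only [map_sum, midIns_tmul, ← Finset.sum_sub_distrib]
  refine Submodule.sum_mem _ fun j _ => Submodule.subset_span ?_
  exact Or.inl (Or.inl (Or.inl (Or.inr ⟨s, q, x, pJ j, qJ j, y, p', rfl⟩)))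

theorem midIns_sy (q : Q) (x : X) (y : Y) (p' : P) (s : S) {κ : Type u} [Fintype κ]
    (pJ : κ → P) (qJ : κ → Q) :
    midIns q x y p' (∑ j : κ, pJ j ⊗ₜ[k] (op s • qJ j))
      - midIns q x (s • y) p' (∑ j : κ, pJ j ⊗ₜ[k] qJ j) ∈ sixRel k R S P Q X Y := by
  simp only [map_sum, midIns_tmul, ← Finset.sum_sub_distrib]
  refine Submodule.sum_mem _ fun j _ => Submodule.subset_span ?_
  exact Or.inl (Or.inr ⟨s, q, x, pJ j, qJ j, y, p', rfl⟩)

end Helpers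

/-- Let `(R, S, P, Q, φ, ψ)` be a Morita context over `k`, and let `X` and
`Y` be `(S,S)`-bimodules with symmetric `k`-action.  Then the assignment
`(q ⊗ x ⊗ p) ⊗ (q' ⊗ y ⊗ p') ↦ q ⊗ (x·φ(p ⊗ q') ⊗ y) ⊗ p'` defines a well-defined
isomorphism of `(R,R)`-bimodules
`(Q ⊗_S X ⊗_S P) ⊗_R (Q ⊗_S Y ⊗_S P) → Q ⊗_S (X ⊗_S Y) ⊗_S P`, with inverse given by
`q ⊗ (x ⊗ y) ⊗ p ↦ Σ_j (q ⊗ x ⊗ p'_j) ⊗ (q'_j ⊗ y ⊗ p)`; the `(R,R)`-bimodule structures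
`r·(q ⊗ ⋯ ⊗ p)·r' = (r·q) ⊗ ⋯ ⊗ (p·r')` are given by the (characterized) action maps
below, and the balanced tensor products are realized as quotients of `k`-tensor products
by the balancing relations. -/
theorem monoidal_structure_iso
    (k R S P Q X Y : Type u) [CommRing k] [Ring R] [Ring S] [Algebra k R] [Algebra k S]
    [AddCommGroup P] [Module k P] [Module S P] [Module Rᵐᵒᵖ P]
    [SMulCommClass S Rᵐᵒᵖ P] [IsScalarTower k S P] [IsScalarTower k Rᵐᵒᵖ P]
    [AddCommGroup Q] [Module k Q] [Module R Q] [Module Sᵐᵒᵖ Q]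
    [SMulCommClass R Sᵐᵒᵖ Q] [IsScalarTower k R Q] [IsScalarTower k Sᵐᵒᵖ Q]
    [AddCommGroup X] [Module k X] [Module S X] [Module Sᵐᵒᵖ X]
    [SMulCommClass S Sᵐᵒᵖ X] [IsScalarTower k S X] [IsScalarTower k Sᵐᵒᵖ X]
    [AddCommGroup Y] [Module k Y] [Module S Y] [Module Sᵐᵒᵖ Y]
    [SMulCommClass S Sᵐᵒᵖ Y] [IsScalarTower k S Y] [IsScalarTower k Sᵐᵒᵖ Y]
    (ctx : MoritaContext k R S P Q)
    (κ : Type u) [Fintype κ] (pJ : κ → P) (qJ : κ → Q)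
    (hJ : ∑ j : κ, ctx.φ (pJ j) (qJ j) = 1)
    -- the `(R,R)`-bimodule actions on the two balanced tensor products
    (lactL : R →ₗ[k] (SixFold k P Q X Y ⧸ sixRel k R S P Q X Y)
      →ₗ[k] (SixFold k P Q X Y ⧸ sixRel k R S P Q X Y))
    (hlactL : ∀ (r : R) (q : Q) (x : X) (p : P) (q' : Q) (y : Y) (p' : P),
      lactL r (Submodule.Quotient.mk
          (q ⊗ₜ[k] (x ⊗ₜ[k] (p ⊗ₜ[k] (q' ⊗ₜ[k] (y ⊗ₜ[k] p'))))))
        = Submodule.Quotient.mk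
            ((r • q) ⊗ₜ[k] (x ⊗ₜ[k] (p ⊗ₜ[k] (q' ⊗ₜ[k] (y ⊗ₜ[k] p'))))))
    (ractL : R →ₗ[k] (SixFold k P Q X Y ⧸ sixRel k R S P Q X Y)
      →ₗ[k] (SixFold k P Q X Y ⧸ sixRel k R S P Q X Y))
    (hractL : ∀ (r : R) (q : Q) (x : X) (p : P) (q' : Q) (y : Y) (p' : P),
      ractL r (Submodule.Quotient.mk
          (q ⊗ₜ[k] (x ⊗ₜ[k] (p ⊗ₜ[k] (q' ⊗ₜ[k] (y ⊗ₜ[k] p'))))))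
        = Submodule.Quotient.mk
            (q ⊗ₜ[k] (x ⊗ₜ[k] (p ⊗ₜ[k] (q' ⊗ₜ[k] (y ⊗ₜ[k] (op r • p')))))))
    (lactR : R →ₗ[k] (ThreeFold k P Q X Y ⧸ threeRel k S P Q X Y)
      →ₗ[k] (ThreeFold k P Q X Y ⧸ threeRel k S P Q X Y))
    (hlactR : ∀ (r : R) (q : Q) (x : X) (y : Y) (p : P),
      lactR r (Submodule.Quotient.mk (q ⊗ₜ[k] ((x ⊗ₜ[k] y) ⊗ₜ[k] p)))
        = Submodule.Quotient.mk ((r • q) ⊗ₜ[k] ((x ⊗ₜ[k] y) ⊗ₜ[k] p)))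
    (ractR : R →ₗ[k] (ThreeFold k P Q X Y ⧸ threeRel k S P Q X Y)
      →ₗ[k] (ThreeFold k P Q X Y ⧸ threeRel k S P Q X Y))
    (hractR : ∀ (r : R) (q : Q) (x : X) (y : Y) (p : P),
      ractR r (Submodule.Quotient.mk (q ⊗ₜ[k] ((x ⊗ₜ[k] y) ⊗ₜ[k] p)))
        = Submodule.Quotient.mk (q ⊗ₜ[k] ((x ⊗ₜ[k] y) ⊗ₜ[k] (op r • p)))) :
    ∃ (F : (SixFold k P Q X Y ⧸ sixRel k R S P Q X Y)
        →ₗ[k] (ThreeFold k P Q X Y ⧸ threeRel k S P Q X Y))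
      (G : (ThreeFold k P Q X Y ⧸ threeRel k S P Q X Y)
        →ₗ[k] (SixFold k P Q X Y ⧸ sixRel k R S P Q X Y)),
      (∀ (q : Q) (x : X) (p : P) (q' : Q) (y : Y) (p' : P),
        F (Submodule.Quotient.mk
            (q ⊗ₜ[k] (x ⊗ₜ[k] (p ⊗ₜ[k] (q' ⊗ₜ[k] (y ⊗ₜ[k] p'))))))
          = Submodule.Quotient.mk
              (q ⊗ₜ[k] (((op (ctx.φ p q') • x) ⊗ₜ[k] y) ⊗ₜ[k] p'))) ∧
      (∀ (q : Q) (x : X) (y : Y) (p : P),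
        G (Submodule.Quotient.mk (q ⊗ₜ[k] ((x ⊗ₜ[k] y) ⊗ₜ[k] p)))
          = ∑ j : κ, Submodule.Quotient.mk
              (q ⊗ₜ[k] (x ⊗ₜ[k] (pJ j ⊗ₜ[k] (qJ j ⊗ₜ[k] (y ⊗ₜ[k] p)))))) ∧
      F.comp G = LinearMap.id ∧ G.comp F = LinearMap.id ∧
      (∀ (r : R) (z : SixFold k P Q X Y ⧸ sixRel k R S P Q X Y),
        F (lactL r z) = lactR r (F z) ∧ F (ractL r z) = ractR r (F z)) := by
  have hbal : ∀ (p : P) (r : R) (q : Q), ctx.φ (op r • p) q = ctx.φ p (r • q) := by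
    intro p r q
    have h : (op r • p) ⊗ₜ[k] q - p ⊗ₜ[k] (r • q) ∈ LinearMap.ker (TensorProduct.lift ctx.φ) := by
      rw [ctx.φ_ker]
      exact Submodule.subset_span ⟨p, r, q, rfl⟩
    simpa [sub_eq_zero] using h
  have hF : sixRel k R S P Q X Y ≤ (threeRel k S P Q X Y).comap (fwd ctx.φ) := by
    unfold sixRel
    rw [Submodule.span_le]
    rintro _ ((((⟨s, q, x, p, q', y, p', rfl⟩ | ⟨s, q, x, p, q', y, p', rfl⟩) |
      ⟨r, q, x, p, q', y, p', rfl⟩) | ⟨s, q, x, p, q', y, p', rfl⟩) | ⟨s, q, x, p, q', y, p', rfl⟩)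
    all_goals simp only [Submodule.comap_coe, Set.mem_preimage, map_sub, fwd_tmul, SetLike.mem_coe]
    · rw [← smul_comm s]
      exact Submodule.subset_span (Or.inl (Or.inl ⟨s, q, _, y, p', rfl⟩))
    · rw [ctx.φ_left, op_mul, mul_smul, sub_self]
      exact Submodule.zero_mem _
    · rw [hbal, sub_self]
      exact Submodule.zero_mem _
    · rw [ctx.φ_right, op_mul, mul_smul]
      exact Submodule.subset_span (Or.inl (Or.inr ⟨s, q, _, y, p', rfl⟩))
    · exact Submodule.subset_span (Or.inr ⟨s, q, _, y, p', rfl⟩)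
  have hG : threeRel k S P Q X Y ≤ (sixRel k R S P Q X Y).comap (bwd pJ qJ) := by
    unfold threeRel
    rw [Submodule.span_le]
    rintro _ ((⟨s, q, x, y, p, rfl⟩ | ⟨s, q, x, y, p, rfl⟩) | ⟨s, q, x, y, p, rfl⟩)
    all_goals simp only [Submodule.comap_coe, Set.mem_preimage, map_sub, bwd_tmul, SetLike.mem_coe]
    · simp only [map_sum, midIns_tmul, ← Finset.sum_sub_distrib]
      refine Submodule.sum_mem _ fun j _ => Submodule.subset_span ?_
      exact Or.inl (Or.inl (Or.inl (Or.inl ⟨s, q, x, pJ j, qJ j, y, p, rfl⟩)))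
    · have h1 := midIns_xs (k := k) (R := R) q x y p s pJ qJ
      have h2 := midIns_sy (k := k) (R := R) q x y p s pJ qJ
      have h3 := midIns_mem (R := R) (S := S) q x y p
        (∑ j : κ, (s • pJ j) ⊗ₜ[k] qJ j - ∑ j : κ, pJ j ⊗ₜ[k] (op s • qJ j)) (by
          rw [← ctx.φ_ker, LinearMap.mem_ker]
          simp only [map_sub, map_sum, TensorProduct.lift.tmul, ctx.φ_left, ctx.φ_right,
            ← Finset.mul_sum, ← Finset.sum_mul, hJ, mul_one, one_mul, sub_self])
      rw [map_sub] at h3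
      have h4 := Submodule.add_mem _ (Submodule.add_mem _ h1 h3) h2
      rwa [sub_add_sub_cancel, sub_add_sub_cancel] at h4
    · simp only [map_sum, midIns_tmul, ← Finset.sum_sub_distrib]
      refine Submodule.sum_mem _ fun j _ => Submodule.subset_span ?_
      exact Or.inr ⟨s, q, x, pJ j, qJ j, y, p, rfl⟩
  let F := Submodule.mapQ _ _ (fwd ctx.φ) hF
  let G := Submodule.mapQ _ _ (bwd pJ qJ) hG
  have hFe : ∀ (q : Q) (x : X) (p : P) (q' : Q) (y : Y) (p' : P),
        F (Submodule.Quotient.mk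
            (q ⊗ₜ[k] (x ⊗ₜ[k] (p ⊗ₜ[k] (q' ⊗ₜ[k] (y ⊗ₜ[k] p'))))))
          = Submodule.Quotient.mk
              (q ⊗ₜ[k] (((op (ctx.φ p q') • x) ⊗ₜ[k] y) ⊗ₜ[k] p')) :=
    fun q x p q' y p' => rfl
  have hGm : ∀ (q : Q) (x : X) (y : Y) (p : P),
        G (Submodule.Quotient.mk (q ⊗ₜ[k] ((x ⊗ₜ[k] y) ⊗ₜ[k] p)))
          = Submodule.Quotient.mk (midIns q x y p (∑ j : κ, pJ j ⊗ₜ[k] qJ j)) := by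
    intro q x y p
    rw [← bwd_tmul]
    rfl
  have hGe : ∀ (q : Q) (x : X) (y : Y) (p : P),
        G (Submodule.Quotient.mk (q ⊗ₜ[k] ((x ⊗ₜ[k] y) ⊗ₜ[k] p)))
          = ∑ j : κ, Submodule.Quotient.mk
              (q ⊗ₜ[k] (x ⊗ₜ[k] (pJ j ⊗ₜ[k] (qJ j ⊗ₜ[k] (y ⊗ₜ[k] p))))) := by
    intro q x y p
    rw [hGm, map_sum, ← Submodule.mkQ_apply, map_sum]
    rfl
  refine ⟨F, G, hFe, hGe, ?_, ?_, ?_⟩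
  · apply three_ext
    intro q x y p
    rw [LinearMap.comp_apply, hGe, map_sum, LinearMap.id_apply]
    simp only [hFe]
    simp only [← Submodule.mkQ_apply]
    rw [← map_sum, ← TensorProduct.tmul_sum, ← TensorProduct.sum_tmul, ← TensorProduct.sum_tmul,
      ← Finset.sum_smul, ← Finset.op_sum, hJ, op_one, one_smul]
  · apply six_ext
    intro q x p q' y p'
    rw [LinearMap.comp_apply, hFe, hGm, LinearMap.id_apply, Submodule.Quotient.eq]
    have h1 := midIns_xs (k := k) (R := R) q x y p' (ctx.φ p q') pJ qJ
    have h3 := midIns_mem (R := R) (S := S) q x y p'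
        (∑ j : κ, (ctx.φ p q' • pJ j) ⊗ₜ[k] qJ j - p ⊗ₜ[k] q') (by
          rw [← ctx.φ_ker, LinearMap.mem_ker]
          simp only [map_sub, map_sum, TensorProduct.lift.tmul, ctx.φ_left,
            ← Finset.mul_sum, hJ, mul_one, sub_self])
    rw [map_sub] at h3
    have h4 := Submodule.add_mem _ h1 h3
    rwa [sub_add_sub_cancel] at h4
  · intro r z
    have e1 : F ∘ₗ lactL r = lactR r ∘ₗ F := by
      apply six_ext
      intro q x p q' y p'
      rw [LinearMap.comp_apply, LinearMap.comp_apply, hlactL, hFe, hFe, hlactR]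
    have e2 : F ∘ₗ ractL r = ractR r ∘ₗ F := by
      apply six_ext
      intro q x p q' y p'
      rw [LinearMap.comp_apply, LinearMap.comp_apply, hractL, hFe, hFe, hractR]
    exact ⟨LinearMap.congr_fun e1 z, LinearMap.congr_fun e2 z⟩
end

section
/- Let N ≥ 1 and let q ∈ ℂ be a primitive N-th root of unity. With U₀ the N×N cyclic shift matrix ((U₀)_{i,j} = 1 if j ≡ i+1 mod N, else 0) and V₀ the diagonal matrix with (V₀)_{i,i} = q^i, the family of N² matrices (U₀^a · V₀^b) for 0 ≤ a, b < N is a ℂ-vector space basis of the algebra of N×N complex matrices; in particular, the matrix algebra M_N(ℂ) is generated as a ℂ-algebra by U₀ and V₀. -/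
/-- Let `N ≥ 1` and let `q ∈ ℂ` be a primitive `N`-th root of unity.  With
`U₀` the `N × N` cyclic shift matrix and `V₀` the diagonal matrix with entries `q ^ i`, the
family of `N²` matrices `U₀ ^ a * V₀ ^ b`, `0 ≤ a, b < N`, is a `ℂ`-vector space basis of the
algebra of `N × N` complex matrices (it is linearly independent and spans); in particular the
matrix algebra `M_N(ℂ)` is generated as a `ℂ`-algebra by `U₀` and `V₀`. -/
theorem shift_clock_matrices_basis (N : ℕ) (hN : 1 ≤ N) (q : ℂ) (hq : IsPrimitiveRoot q N)
    (U₀ V₀ : Matrix (Fin N) (Fin N) ℂ)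
    (hU : ∀ i j : Fin N, U₀ i j = if (j : ℕ) = ((i : ℕ) + 1) % N then 1 else 0)
    (hV : V₀ = Matrix.diagonal fun i : Fin N => q ^ (i : ℕ)) :
    LinearIndependent ℂ (fun ab : Fin N × Fin N => U₀ ^ (ab.1 : ℕ) * V₀ ^ (ab.2 : ℕ)) ∧
    Submodule.span ℂ
      (Set.range fun ab : Fin N × Fin N => U₀ ^ (ab.1 : ℕ) * V₀ ^ (ab.2 : ℕ)) = ⊤ ∧
    Algebra.adjoin ℂ {U₀, V₀} = ⊤ := by
  have hpow : ∀ (a : ℕ) (i j : Fin N),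
      (U₀ ^ a) i j = if (j : ℕ) = ((i : ℕ) + a) % N then 1 else 0 := by
    intro a
    induction a with
    | zero =>
      intro i j
      simp [Matrix.one_apply, Nat.mod_eq_of_lt i.2, Fin.ext_iff, eq_comm]
    | succ a ih =>
      intro i j
      rw [pow_succ, Matrix.mul_apply,
        Finset.sum_eq_single (⟨((i : ℕ) + a) % N, Nat.mod_lt _ hN⟩ : Fin N)]
      · rw [ih, hU]
        simp [add_assoc]
      · intro k _ hk
        rw [ih, if_neg, zero_mul]
        intro h
        exact hk (Fin.ext h)
      · simp
  have hent : ∀ (a b : ℕ) (i j : Fin N), (U₀ ^ a * V₀ ^ b) i j =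
      if (j : ℕ) = ((i : ℕ) + a) % N then (q ^ (j : ℕ)) ^ b else 0 := by
    intro a b i j
    rw [hV, Matrix.diagonal_pow, Matrix.mul_diagonal, hpow]
    simp
  have hli : LinearIndependent ℂ
      (fun ab : Fin N × Fin N => U₀ ^ (ab.1 : ℕ) * V₀ ^ (ab.2 : ℕ)) := by
    rw [Fintype.linearIndependent_iff]
    rintro c hc ⟨a, b⟩
    have key : ∀ j : Fin N, ∑ b : Fin N, (q ^ (j : ℕ)) ^ (b : ℕ) * c (a, b) = 0 := by
      intro j
      have h := congrFun (congrFun hc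
        (⟨((j : ℕ) + (N - a)) % N, Nat.mod_lt _ hN⟩ : Fin N)) j
      rw [Matrix.sum_apply, Fintype.sum_prod_type, Finset.sum_eq_single a] at h
      · rw [Matrix.zero_apply] at h
        rw [← h]
        refine Finset.sum_congr rfl fun b _ => ?_
        rw [Matrix.smul_apply, hent, if_pos, smul_eq_mul, mul_comm]
        have := a.2
        have hj := j.2
        simp only [Nat.mod_add_mod]
        rw [show (j : ℕ) + (N - a) + a = j + N by omega, Nat.add_mod_right,
          Nat.mod_eq_of_lt hj]
      · intro a' _ ha'
        refine Finset.sum_eq_zero fun b _ => ?_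
        rw [Matrix.smul_apply, hent, if_neg, smul_zero]
        intro hh
        apply ha'
        have h1 := a.2
        have h2 := a'.2
        have hj := j.2
        simp only [Nat.mod_add_mod] at hh
        have h3 : (j : ℕ) + (N - a) + a ≡ (j : ℕ) + (N - a) + a' [MOD N] := by
          unfold Nat.ModEq
          rw [← hh, show (j : ℕ) + (N - a) + a = j + N by omega, Nat.add_mod_right,
            Nat.mod_eq_of_lt hj]
        have h4 := Nat.ModEq.add_left_cancel' _ h3
        exact Fin.ext (Nat.ModEq.eq_of_lt_of_lt h4 h1 h2).symm
      · simp
    have hinj : Function.Injective (fun j : Fin N => q ^ (j : ℕ)) := by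
      intro x y hxy
      exact Fin.ext (hq.pow_inj x.2 y.2 hxy)
    have hz := Matrix.eq_zero_of_mulVec_eq_zero (v := fun b => c (a, b))
      (Matrix.det_vandermonde_ne_zero_iff.mpr hinj) (by
        funext j
        simpa [Matrix.mulVec, dotProduct, Matrix.vandermonde_apply] using key j)
    exact congrFun hz b
  have hspan : Submodule.span ℂ
      (Set.range fun ab : Fin N × Fin N => U₀ ^ (ab.1 : ℕ) * V₀ ^ (ab.2 : ℕ)) = ⊤ := by
    apply hli.span_eq_top_of_card_eq_finrank'
    simp [Module.finrank_matrix]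
  refine ⟨hli, hspan, ?_⟩
  rw [← Algebra.toSubmodule_eq_top, eq_top_iff, ← hspan, Submodule.span_le]
  rintro _ ⟨ab, rfl⟩
  exact Subalgebra.mul_mem _
    (Subalgebra.pow_mem _ (Algebra.subset_adjoin (by simp)) _)
    (Subalgebra.pow_mem _ (Algebra.subset_adjoin (by simp)) _)
end
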